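/- arXiv:2010.11766 — 4 statements merged into one kernel-verified Lean document; each statement's English description precedes it below -/
import Mathlib

section
/- For every g ≥ 1, every element of the coinvariants (Λ³H)_{GL_g(ℤ)} is 2-torsion; equivalently, for every w ∈ Λ³H the element 2w lies in the subgroup of Λ³H generated by all G·v − v with G ∈ GL_g(ℤ), v ∈ Λ³H. -/
/-!
The matrix `-1 ∈ GL_g(ℤ)` equals its own inverse transpose, so it acts on `H` as `-1`, hence on
`Λ³H` as `(-1)³ = -1`. For `w ∈ Λ³H` this gives `2w = (-1)·v - v` with `v = -w`.
-/

open Matrix ExteriorAlgebra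

/-- `H = ℤ^{2g}`, with the first copy of `Fin g` indexing the basis `a₁,…,a_g` and the
second copy indexing `b₁,…,b_g`. -/
abbrev HZmod (g : ℕ) : Type := (Fin g ⊕ Fin g) → ℤ

/-- The action of `G ∈ GL_g(ℤ)` on `H = ℤ^{2g}`: `G` acts by `G` on the span of the `aᵢ`
and by `ᵗG⁻¹` on the span of the `bᵢ`. -/
noncomputable def glActZ (g : ℕ) (G : GL (Fin g) ℤ) : HZmod g →ₗ[ℤ] HZmod g :=
  Matrix.mulVecLin
    (Matrix.fromBlocks (G : Matrix (Fin g) (Fin g) ℤ) 0 0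
      ((↑(G⁻¹ : GL (Fin g) ℤ) : Matrix (Fin g) (Fin g) ℤ))ᵀ)

theorem glActZ_neg_one (g : ℕ) : glActZ g (-1) = -LinearMap.id := by
  have h : ((-1 : GL (Fin g) ℤ)⁻¹) = -1 := by simp
  have hb : Matrix.fromBlocks (-1 : Matrix (Fin g) (Fin g) ℤ) 0 0 (-1)
      = -(1 : Matrix (Fin g ⊕ Fin g) (Fin g ⊕ Fin g) ℤ) := by
    rw [← Matrix.fromBlocks_one, Matrix.fromBlocks_neg]
    simp
  refine LinearMap.ext fun x => ?_
  rw [glActZ, h]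
  simp [hb]

theorem map_neg_id_of_mem_exteriorPower_three {M : Type*} [AddCommGroup M]
    {w : ExteriorAlgebra ℤ M} (hw : w ∈ ⋀[ℤ]^3 M) :
    ExteriorAlgebra.map (-LinearMap.id : M →ₗ[ℤ] M) w = -w := by
  rw [← ExteriorAlgebra.ιMulti_span_fixedDegree] at hw
  induction hw using Submodule.span_induction with
  | mem x hx =>
    obtain ⟨m, rfl⟩ := hx
    simp [ExteriorAlgebra.ιMulti_apply]
  | zero => simp
  | add x y _ _ hx hy => rw [map_add, hx, hy, neg_add]
  | smul c x _ hx => rw [map_smul, hx, smul_neg]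

/-- For every `g ≥ 1`, every element of the coinvariants `(Λ³H)_{GL_g(ℤ)}` is
`2`-torsion: for every `w ∈ Λ³H` the element `2w` lies in the subgroup of `Λ³H` generated
by all `G·v − v` with `G ∈ GL_g(ℤ)`, `v ∈ Λ³H`. -/
theorem stmt8 (g : ℕ) (hg : 1 ≤ g) :
    ∀ w ∈ (⋀[ℤ]^3 (HZmod g) : Submodule ℤ (ExteriorAlgebra ℤ (HZmod g))),
      (2 : ℤ) • w ∈ Submodule.span ℤ
        {m : ExteriorAlgebra ℤ (HZmod g) |
          ∃ (G : GL (Fin g) ℤ) (v : ExteriorAlgebra ℤ (HZmod g)),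
            v ∈ (⋀[ℤ]^3 (HZmod g) : Submodule ℤ (ExteriorAlgebra ℤ (HZmod g))) ∧
            m = ExteriorAlgebra.map (glActZ g G) v - v} := by
  intro w hw
  refine Submodule.subset_span ⟨-1, -w, neg_mem hw, ?_⟩
  rw [glActZ_neg_one, map_neg_id_of_mem_exteriorPower_three (neg_mem hw), two_smul]
  abel
end

section
/- For g ≥ 4, the coinvariants (Λ³H)_{GL_g(ℤ)} vanish; equivalently, Λ³H is generated as an abelian group by the elements G·w − w with G ∈ GL_g(ℤ), w ∈ Λ³H. -/
/-!
The elementary matrix `1 + E_{il}` sends `a_l` to `a_l + a_i` and `b_i` to `b_i - b_l`, fixing all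
other basis vectors; dually, the inverse of `1 + E_{li}` sends `b_l` to `b_l + b_i` and moves
otherwise only `a_i` (`exists_glActZ_single`). Take a wedge of three distinct basis vectors.
Pairing `aᵢ` with `bᵢ` is a fixed-point-free involution, so, three being odd, one of the vectors, `x`,
has its partner outside the triple. As `g ≥ 4`, there is an index `l` not occurring in the triple.
Replacing `x` by the basis vector of the same type with index `l` gives `w`, and the
transvection sending this vector to its sum with `x` fixes the other two factors; hence `G·w - w` is
the given wedge. Such wedges generate `Λ³H`.
-/

open Matrix ExteriorAlgebra

/-- The transvection `1 + c E_{ij}` as an element of `GL_g(ℤ)`. -/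
def transvectionGL {g : ℕ} (i j : Fin g) (h : i ≠ j) (c : ℤ) : GL (Fin g) ℤ where
  val := transvection i j c
  inv := transvection i j (-c)
  val_inv := (transvection_mul_transvection_same i j h c (-c)).trans (by simp)
  inv_val := (transvection_mul_transvection_same i j h (-c) c).trans (by simp)

/-- The index in `Fin g` of a basis vector of `H`, forgetting whether it is an `a` or a `b`. -/
def idx {g : ℕ} : Fin g ⊕ Fin g → Fin g := Sum.elim id id

/-- The basis index of the same type (`a` or `b`) as `p`, but at position `l`. -/
def moveTo {g : ℕ} (p : Fin g ⊕ Fin g) (l : Fin g) : Fin g ⊕ Fin g :=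
  Sum.map (fun _ => l) (fun _ => l) p

lemma exists_glActZ_single {g : ℕ} (p : Fin g ⊕ Fin g) (l : Fin g) (hl : idx p ≠ l) :
    ∃ G : GL (Fin g) ℤ,
      glActZ g G (Pi.single (moveTo p l) 1) = Pi.single (moveTo p l) 1 + Pi.single p 1 ∧
      ∀ r, r ≠ moveTo p l → r ≠ p.swap →
        glActZ g G (Pi.single r 1) = Pi.single r 1 := by
  rcases p with i | i
  · refine ⟨transvectionGL i l hl 1, ?_, ?_⟩
    · ext (k | k) <;>
        simp [glActZ, moveTo, transvectionGL, transvection, Matrix.one_apply, Matrix.single_apply,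
          Pi.single_apply, eq_comm]
    · rintro (r | r) h1 h2 <;> ext (k | k) <;>
        simp_all [glActZ, moveTo, transvectionGL, transvection, Matrix.one_apply,
          Pi.single_apply, eq_comm]
  · refine ⟨transvectionGL l i (Ne.symm hl) (-1), ?_, ?_⟩
    · ext (k | k) <;>
        simp [glActZ, moveTo, transvectionGL, transvection, Matrix.one_apply, Matrix.single_apply,
          Pi.single_apply, eq_comm]
    · rintro (r | r) h1 h2 <;> ext (k | k) <;>
        simp_all [glActZ, moveTo, transvectionGL, transvection, Matrix.one_apply,
          Pi.single_apply, eq_comm]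

/-- Among three distinct basis vectors, one has its partner under `aᵢ ↔ bᵢ` outside the triple. -/
lemma exists_swap_ne {g : ℕ} (v : Fin 3 → Fin g ⊕ Fin g) (hv : Function.Injective v) :
    ∃ m, ∀ n, v n ≠ (v m).swap := by
  by_contra! h
  choose f hf using h
  have hne : ∀ m, f m ≠ m := fun m hm => by
    have := hf m
    rw [hm] at this
    rcases h' : v m with i | i <;> simp [h'] at this
  have hinv : ∀ m, f (f m) = m := fun m => hv (by rw [hf, hf, Sum.swap_swap])
  clear hf
  revert f
  decide

lemma exists_idx_notMem {g : ℕ} (hg : 4 ≤ g) (v : Fin 3 → Fin g ⊕ Fin g) :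
    ∃ l, ∀ n, idx (v n) ≠ l := by
  by_contra! h
  have := Fintype.card_le_of_surjective (fun n => idx (v n)) h
  simp at this
  omega

lemma map_mem_exteriorPower {M : Type*} [AddCommGroup M] (f : M →ₗ[ℤ] M) (n : ℕ)
    {w : ExteriorAlgebra ℤ M} (hw : w ∈ ⋀[ℤ]^n M) : ExteriorAlgebra.map f w ∈ ⋀[ℤ]^n M := by
  rw [← ιMulti_span_fixedDegree] at hw ⊢
  induction hw using Submodule.span_induction with
  | mem x hx =>
    obtain ⟨v, rfl⟩ := hx
    rw [map_apply_ιMulti]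
    exact Submodule.subset_span ⟨_, rfl⟩
  | zero => simp
  | add x y _ _ hx hy => rw [map_add]; exact add_mem hx hy
  | smul c x _ hx => rw [map_smul]; exact Submodule.smul_mem _ c hx

/-- A wedge of three distinct basis vectors has the form `G·w - w`. -/
lemma exists_map_sub_eq {g : ℕ} (hg : 4 ≤ g) (v : Fin 3 → Fin g ⊕ Fin g)
    (hv : Function.Injective v) :
    ∃ (G : GL (Fin g) ℤ) (w : ExteriorAlgebra ℤ (HZmod g)), w ∈ ⋀[ℤ]^3 (HZmod g) ∧
      ιMulti ℤ 3 (fun n => (Pi.single (v n) 1 : HZmod g)) =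
        ExteriorAlgebra.map (glActZ g G) w - w := by
  obtain ⟨m, hm⟩ := exists_swap_ne v hv
  obtain ⟨l, hl⟩ := exists_idx_notMem hg v
  obtain ⟨G, hG, hG'⟩ := exists_glActZ_single (v m) l (hl m)
  have hmove : ∀ n, v n ≠ moveTo (v m) l := fun n h => hl n <| by
    rw [h]; rcases v m with i | i <;> rfl
  set e : Fin 3 → HZmod g := fun n => Pi.single (v n) 1 with he
  refine ⟨G, ιMulti ℤ 3 (Function.update e m (Pi.single (moveTo (v m) l) 1)), ?_, ?_⟩
  · exact ιMulti_range ℤ 3 ⟨_, rfl⟩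
  · have key : (glActZ g G) ∘ Function.update e m (Pi.single (moveTo (v m) l) 1) =
        Function.update e m (Pi.single (moveTo (v m) l) 1 + e m) := by
      funext n
      rcases eq_or_ne n m with rfl | hn
      · simp [hG, he]
      · simp [hn, he, hG' _ (hmove n) (hm n)]
    rw [map_apply_ιMulti, key, AlternatingMap.map_update_add, Function.update_eq_self,
      add_sub_cancel_left]

/-- For `g ≥ 4`, the coinvariants `(Λ³H)_{GL_g(ℤ)}` vanish; equivalently,
`Λ³H` is generated as an abelian group by the elements `G·w − w` with `G ∈ GL_g(ℤ)`,
`w ∈ Λ³H`. -/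
theorem stmt9 (g : ℕ) (hg : 4 ≤ g) :
    Submodule.span ℤ
      {m : ExteriorAlgebra ℤ (HZmod g) |
        ∃ (G : GL (Fin g) ℤ) (w : ExteriorAlgebra ℤ (HZmod g)),
          w ∈ (⋀[ℤ]^3 (HZmod g) : Submodule ℤ (ExteriorAlgebra ℤ (HZmod g))) ∧
          m = ExteriorAlgebra.map (glActZ g G) w - w} =
    (⋀[ℤ]^3 (HZmod g) : Submodule ℤ (ExteriorAlgebra ℤ (HZmod g))) := by
  apply le_antisymm
  · rw [Submodule.span_le]
    rintro _ ⟨G, w, hw, rfl⟩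
    exact sub_mem (map_mem_exteriorPower _ 3 hw) hw
  · set S := Submodule.span ℤ
      {m : ExteriorAlgebra ℤ (HZmod g) |
        ∃ (G : GL (Fin g) ℤ) (w : ExteriorAlgebra ℤ (HZmod g)),
          w ∈ (⋀[ℤ]^3 (HZmod g) : Submodule ℤ (ExteriorAlgebra ℤ (HZmod g))) ∧
          m = ExteriorAlgebra.map (glActZ g G) w - w} with hS
    -- An alternating map is determined by its values on distinct basis vectors, so the
    -- reduction of the universal one modulo `S` is zero.
    have h0 : S.mkQ.compAlternatingMap (ιMulti ℤ 3) = 0 := by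
      refine Module.Basis.ext_alternating (Pi.basisFun ℤ (Fin g ⊕ Fin g)) fun v hv => ?_
      obtain ⟨G, w, hw, h⟩ := exists_map_sub_eq hg v hv
      simp only [LinearMap.compAlternatingMap_apply, AlternatingMap.zero_apply,
        Submodule.mkQ_apply, Submodule.Quotient.mk_eq_zero, Pi.basisFun_apply]
      exact Submodule.subset_span ⟨G, w, hw, h⟩
    rw [← ιMulti_span_fixedDegree, Submodule.span_le]
    rintro _ ⟨v, rfl⟩
    have := congrArg (fun f => f v) h0
    simpa using this
end

section
/- For g ≥ 4, the coinvariants (Λ³H₂)_{GL_g(ℤ)} vanish; equivalently, Λ³H₂ is spanned over ℤ/2 by the elements G·w − w with G ∈ GL_g(ℤ), w ∈ Λ³H₂. -/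
/-!
The elementary matrix `1 + E_{ij}` sends `a_j` to `a_j + a_i` and `b_i` to `b_i - b_j`, and fixes
every other basis vector. Hence, if neither `x` nor `y` is `a_j` or `b_i`, applying it to
`a_j ∧ x ∧ y` shows that `a_i ∧ x ∧ y` is a difference `G·w - w`. As `g ≥ 4`, an index `j` which
differs from `i` and from the indices of `x` and `y` always exists, so `a_i ∧ x ∧ y` is in the span
as soon as `b_i ∉ {x, y}` (`triple_mem`); dually for `b_i ∧ x ∧ y` with `a_i ∉ {x, y}`.
Among three distinct basis vectors at least one is not dual to either of the other two, so, after
a cyclic rotation of the factors, every basis vector of `Λ³H₂` is covered.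
-/

open Matrix ExteriorAlgebra

/-- `H₂ = (ℤ/2ℤ)^{2g}`, with the first copy of `Fin g` indexing the basis `a₁,…,a_g` and
the second copy indexing `b₁,…,b_g`. -/
abbrev Htwo (g : ℕ) : Type := (Fin g ⊕ Fin g) → ZMod 2

/-- The action of `G ∈ GL_g(ℤ)` on `H₂`: `G` acts by the mod-2 reduction of `G` on the
span of the `aᵢ` and by the mod-2 reduction of `ᵗG⁻¹` on the span of the `bᵢ`. -/
noncomputable def glActTwo (g : ℕ) (G : GL (Fin g) ℤ) : Htwo g →ₗ[ZMod 2] Htwo g :=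
  Matrix.mulVecLin
    (Matrix.fromBlocks
      ((G : Matrix (Fin g) (Fin g) ℤ).map (Int.cast : ℤ → ZMod 2)) 0 0
      (((↑(G⁻¹ : GL (Fin g) ℤ) : Matrix (Fin g) (Fin g) ℤ).map (Int.cast : ℤ → ZMod 2))ᵀ))

/-- The transvection `1 + E_{ij}` as an element of `GL_g(ℤ)`. -/
def transGL {g : ℕ} (i j : Fin g) (h : i ≠ j) : GL (Fin g) ℤ where
  val := transvection i j 1
  inv := transvection i j (-1)
  val_inv := by simp [transvection_mul_transvection_same _ _ h]
  inv_val := by simp [transvection_mul_transvection_same _ _ h]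

/-- The distinguished basis: `e2 (inl i) = a_i` and `e2 (inr i) = b_i`; thus `Sum.swap` on the
index exchanges `a_i` and `b_i`. -/
abbrev e2 {g : ℕ} (p : Fin g ⊕ Fin g) : Htwo g := Pi.single p 1

lemma act_inl {g : ℕ} (i j : Fin g) (h : i ≠ j) (k : Fin g) :
    glActTwo g (transGL i j h) (e2 (.inl k)) =
      e2 (.inl k) + if k = j then e2 (.inl i) else 0 := by
  have h1 : ((transGL i j h : GL (Fin g) ℤ) : Matrix (Fin g) (Fin g) ℤ) =
    transvection i j 1 := rfl
  ext (l | l)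
  · simp only [glActTwo, mulVecLin_apply, mulVec_single_one, h1, transvection]
    clear h1
    have hne : k = j → l = i → l ≠ k := by rintro rfl rfl; exact h
    by_cases hk : k = j <;> by_cases hl : l = i <;> by_cases hlk : l = k <;>
      first
      | exact absurd hlk (hne hk hl)
      | simp_all [Matrix.single, Pi.single_apply, eq_comm]
  · simp only [glActTwo, mulVecLin_apply, mulVec_single_one, h1, transvection]
    clear h1
    by_cases hk : k = j <;> simp_all

lemma act_inr {g : ℕ} (i j : Fin g) (h : i ≠ j) (k : Fin g) :
    glActTwo g (transGL i j h) (e2 (.inr k)) =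
      e2 (.inr k) + if k = i then e2 (.inr j) else 0 := by
  have h1 : (((transGL i j h)⁻¹ : GL (Fin g) ℤ) : Matrix (Fin g) (Fin g) ℤ) =
    transvection i j (-1) := rfl
  ext (l | l)
  · simp only [glActTwo, mulVecLin_apply, mulVec_single_one, h1, transvection]
    clear h1
    by_cases hk : k = i <;> simp_all
  · simp only [glActTwo, mulVecLin_apply, mulVec_single_one, h1, transvection]
    clear h1
    have hne : k = i → l = j → l ≠ k := by rintro rfl rfl; exact h.symm
    by_cases hk : k = i <;> by_cases hl : l = j <;> by_cases hlk : l = k <;>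
      first
      | exact absurd hlk (hne hk hl)
      | simp_all [Matrix.single, Pi.single_apply, eq_comm]

/-- The product `e_p ∧ e_q ∧ e_r`. -/
noncomputable abbrev triple {g : ℕ} (p q r : Fin g ⊕ Fin g) : ExteriorAlgebra (ZMod 2) (Htwo g) :=
  ι (ZMod 2) (e2 p) * ι (ZMod 2) (e2 q) * ι (ZMod 2) (e2 r)

lemma triple_mem_pow {g : ℕ} (p q r : Fin g ⊕ Fin g) :
    triple p q r ∈ (⋀[ZMod 2]^3 (Htwo g)) := by
  change _ ∈ LinearMap.range (ι (ZMod 2) : Htwo g →ₗ[ZMod 2] _) ^ 3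
  rw [pow_three']
  exact Submodule.mul_mem_mul (Submodule.mul_mem_mul ⟨_, rfl⟩ ⟨_, rfl⟩) ⟨_, rfl⟩

lemma ι_mul_comm_neg {g : ℕ} (x y : Htwo g) :
    ι (ZMod 2) x * ι (ZMod 2) y = - (ι (ZMod 2) y * ι (ZMod 2) x) :=
  eq_neg_of_add_eq_zero_left (ι_add_mul_swap x y)

lemma triple_rotate {g : ℕ} (p q r : Fin g ⊕ Fin g) : triple p q r = triple r p q := by
  unfold triple
  rw [mul_assoc, ι_mul_comm_neg (e2 q), mul_neg, ← mul_assoc, ι_mul_comm_neg (e2 p), neg_mul,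
    neg_neg]

lemma triple_self {g : ℕ} (p r : Fin g ⊕ Fin g) : triple p p r = 0 := by
  simp [triple]

/-- The set of differences `G·w - w` with `w ∈ Λ³H₂`. -/
def coinvSet (g : ℕ) : Set (ExteriorAlgebra (ZMod 2) (Htwo g)) :=
  {m : ExteriorAlgebra (ZMod 2) (Htwo g) |
        ∃ (G : GL (Fin g) ℤ) (w : ExteriorAlgebra (ZMod 2) (Htwo g)),
          w ∈ (⋀[ZMod 2]^3 (Htwo g) : Submodule (ZMod 2) (ExteriorAlgebra (ZMod 2) (Htwo g))) ∧
          m = ExteriorAlgebra.map (glActTwo g G) w - w}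

/-- If `G` sends `e_s` to `e_s + e_p` and fixes `e_q` and `e_r`, then `e_p ∧ e_q ∧ e_r` is
`G·w - w` for `w = e_s ∧ e_q ∧ e_r`. -/
lemma triple_mem_of_act {g : ℕ} (G : GL (Fin g) ℤ) (p q r s : Fin g ⊕ Fin g)
    (hs : glActTwo g G (e2 s) = e2 s + e2 p) (hq : glActTwo g G (e2 q) = e2 q)
    (hr : glActTwo g G (e2 r) = e2 r) : triple p q r ∈ coinvSet g := by
  refine ⟨G, triple s q r, triple_mem_pow _ _ _, ?_⟩
  simp only [triple, map_mul, map_apply_ι, hs, hq, hr, map_add]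
  noncomm_ring

/-- A triple product whose first factor is not dual to the other two is a difference `G·w - w`. -/
lemma triple_mem {g : ℕ} (hg : 4 ≤ g) (p q r : Fin g ⊕ Fin g) (hq : q ≠ p.swap)
    (hr : r ≠ p.swap) : triple p q r ∈ coinvSet g := by
  let idx : Fin g ⊕ Fin g → Fin g := Sum.elim id id
  obtain ⟨j, hj⟩ : ∃ j, j ∉ ({idx p, idx q, idx r} : Finset (Fin g)) := by
    by_contra! hcon
    have h3 := Finset.card_le_three (a := idx p) (b := idx q) (c := idx r)
    rw [Finset.eq_univ_of_forall hcon, Finset.card_univ, Fintype.card_fin] at h3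
    omega
  simp only [Finset.mem_insert, Finset.mem_singleton, not_or] at hj
  obtain ⟨hjp, hjq, hjr⟩ := hj
  rcases p with i | i
  · change j ≠ i at hjp
    have fix : ∀ x : Fin g ⊕ Fin g, x ≠ .inr i → j ≠ idx x →
        glActTwo g (transGL i j (Ne.symm hjp)) (e2 x) = e2 x := by
      rintro (k | k) h1 h2
      · rw [act_inl, if_neg (show ¬ k = j from Ne.symm h2), add_zero]
      · rw [act_inr, if_neg (by simpa using h1), add_zero]
    exact triple_mem_of_act _ _ _ _ (.inl j) (by rw [act_inl, if_pos rfl]) (fix _ hq hjq)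
      (fix _ hr hjr)
  · change j ≠ i at hjp
    have fix : ∀ x : Fin g ⊕ Fin g, x ≠ .inl i → j ≠ idx x →
        glActTwo g (transGL j i hjp) (e2 x) = e2 x := by
      rintro (k | k) h1 h2
      · rw [act_inl, if_neg (by simpa using h1), add_zero]
      · rw [act_inr, if_neg (show ¬ k = j from Ne.symm h2), add_zero]
    exact triple_mem_of_act _ _ _ _ (.inr j) (by rw [act_inr, if_pos rfl]) (fix _ hq hjq)
      (fix _ hr hjr)

lemma triple_mem_span {g : ℕ} (hg : 4 ≤ g) (p q r : Fin g ⊕ Fin g) :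
    triple p q r ∈ Submodule.span (ZMod 2) (coinvSet g) := by
  -- A dual pair in the first two positions: either the third factor repeats one of them, or it
  -- is dual to neither and can be rotated to the front.
  have key : ∀ p r : Fin g ⊕ Fin g,
      triple p p.swap r ∈ Submodule.span (ZMod 2) (coinvSet g) := by
    intro p r
    by_cases h1 : p = r.swap
    · subst h1
      rw [Sum.swap_swap, triple_rotate, triple_rotate, triple_self]
      exact zero_mem _
    by_cases h2 : p.swap = r.swap
    · have h3 : p = r := by simpa using congrArg Sum.swap h2
      subst h3
      rw [triple_rotate, triple_self]
      exact zero_mem _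
    rw [triple_rotate]
    exact Submodule.subset_span (triple_mem hg _ _ _ h1 h2)
  by_cases hq : q = p.swap
  · subst hq
    exact key _ _
  by_cases hr : r = p.swap
  · subst hr
    rw [triple_rotate]
    simpa using key p.swap q
  exact Submodule.subset_span (triple_mem hg _ _ _ hq hr)

lemma range_ι_eq_span (g : ℕ) :
    LinearMap.range (ι (ZMod 2) : Htwo g →ₗ[ZMod 2] _) =
      Submodule.span (ZMod 2) (Set.range fun p : Fin g ⊕ Fin g => ι (ZMod 2) (e2 p)) := by
  rw [LinearMap.range_eq_map, ← (Pi.basisFun (ZMod 2) (Fin g ⊕ Fin g)).span_eq,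
    Submodule.map_span, ← Set.range_comp]
  congr 2
  ext p
  simp

/-- For `g ≥ 4`, the coinvariants `(Λ³H₂)_{GL_g(ℤ)}` vanish; equivalently,
`Λ³H₂` is spanned over `ℤ/2` by the elements `G·w − w` with `G ∈ GL_g(ℤ)`, `w ∈ Λ³H₂`. -/
theorem stmt10 (g : ℕ) (hg : 4 ≤ g) :
    Submodule.span (ZMod 2)
      {m : ExteriorAlgebra (ZMod 2) (Htwo g) |
        ∃ (G : GL (Fin g) ℤ) (w : ExteriorAlgebra (ZMod 2) (Htwo g)),
          w ∈ (⋀[ZMod 2]^3 (Htwo g) : Submodule (ZMod 2) (ExteriorAlgebra (ZMod 2) (Htwo g))) ∧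
          m = ExteriorAlgebra.map (glActTwo g G) w - w} =
    (⋀[ZMod 2]^3 (Htwo g) : Submodule (ZMod 2) (ExteriorAlgebra (ZMod 2) (Htwo g))) := by
  change Submodule.span (ZMod 2) (coinvSet g) = _
  apply le_antisymm
  · rw [Submodule.span_le]
    rintro _ ⟨G, w, hw, rfl⟩
    refine Submodule.sub_mem _ ?_ hw
    have h1 : Submodule.map (ExteriorAlgebra.map (glActTwo g G)).toLinearMap
        (⋀[ZMod 2]^3 (Htwo g)) ≤ ⋀[ZMod 2]^3 (Htwo g) := by
      rw [Submodule.map_pow]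
      refine pow_le_pow_left' ?_ 3
      rintro _ ⟨_, ⟨x, rfl⟩, rfl⟩
      exact ⟨glActTwo g G x, by simp⟩
    exact h1 ⟨w, hw, rfl⟩
  · change LinearMap.range (ι (ZMod 2) : Htwo g →ₗ[ZMod 2] _) ^ 3 ≤ _
    rw [range_ι_eq_span, pow_three', Submodule.span_mul_span, Submodule.span_mul_span,
      Submodule.span_le]
    rintro _ ⟨_, ⟨_, ⟨p, rfl⟩, _, ⟨q, rfl⟩, rfl⟩, _, ⟨r, rfl⟩, rfl⟩
    exact triple_mem_span hg p q r
end

section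
/- For g ≥ 3, the group IA equals the subgroup of Aut(F_g) generated by all commutators f ∘ k ∘ f⁻¹ ∘ k⁻¹ with f ∈ Aut(F_g) and k ∈ IA; equivalently, the coinvariants of the abelianization of IA under the conjugation action of Aut(F_g) are trivial. -/
/-!
Write `N = [Aut(F_g), IA] ≤ IA` and `Q = Aut(F_g) / N`. The action on `ℤ^g` factors through `Q`,
and the kernel of `Q → GL_g(ℤ)` is `IA / N`, so the theorem says that this map is injective.

By Nielsen's theorem (`Nielsen.mem_E`), `Aut(F_g)` is generated by the signed permutations of the
generators and the right transvections `R i j : x_j ↦ x_j x_i`. The left transvections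
`L i j : x_j ↦ x_i x_j` have the same image in `Q` as soon as `g ≥ 3`: the quotient
`(L l j)⁻¹ R l j` is the conjugation `x_j ↦ x_l⁻¹ x_j x_l`, which lies in `IA`, and it is a
commutator of the conjugation of `x_j` by a third generator `x_i` with the transvection
`x_i ↦ x_i x_l`, up to conjugation (`Coinv.conj_gen_mem_N`). Once left and right are identified, the
images `e i j` of the transvections and the signed permutations satisfy the relations among
elementary matrices and signed permutation matrices (`Coinv.datum`). These relations present
`GL_n(ℤ)` (`SteinbergDatum.ρ_injOn`), whence the injectivity.

The presentation is proved by induction on the set of coordinates. The essential point is that the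
stabilizer of a basis vector `ε_m` is generated by the obvious elements. It is shown by peak
reduction on the `ℓ¹`-norm of `q ε_m`: the elements `q` which the Euclidean algorithm brings back
to `± ε_k` times a product of obvious elements form a set `D` stable under left multiplication by
all generators (`SteinbergDatum.closedBelow`), the local confluence of two reducing steps
(`SteinbergDatum.confluence`) being read off the relations. The stabilizer is then a product of an
abelian group of transvections and the group for one coordinate fewer (`SteinbergDatum.SA_decomp`).

Nielsen's theorem is proved by minimising, under elementary moves, the total length of the images
of the generators, ties being broken by a lexicographic rank `Nielsen.mu` of half-words. At a
minimum, no image of a generator cancels completely between two neighbours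
(`Nielsen.canc_add_lt`), so the automorphism does not shorten words (`Nielsen.growth`), which
makes it a signed permutation.
-/

set_option linter.unusedSimpArgs false
set_option linter.unusedSectionVars false

/-- `IA` is the subgroup of `Aut(F_g)` of automorphisms acting trivially on the
abelianization `F_g^{ab} ≅ ℤ^g` (i.e. the kernel of `Aut(F_g) → GL_g(ℤ)`). -/
def IAgrp (g : ℕ) : Subgroup (MulAut (FreeGroup (Fin g))) where
  carrier := {f | ∀ x : FreeGroup (Fin g), Abelianization.of (f x) = Abelianization.of x}
  one_mem' := fun _ => rfl
  mul_mem' := by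
    intro a b ha hb x
    have : (a * b) x = a (b x) := rfl
    rw [this, ha, hb]
  inv_mem' := by
    intro a ha x
    have h := ha (a⁻¹ x)
    have : a (a⁻¹ x) = x := a.apply_symm_apply x
    rw [this] at h
    exact h.symm

/-! ### Groups satisfying the relations of `GL_n(ℤ)` -/

/-- A group `Q` acting on `ℤ^ι`, with elements `e i j` acting as elementary matrices and a subgroup
`W` acting faithfully by signed permutation matrices, such that a list of relations between them
which hold in `GL_n(ℤ)` already hold in `Q`. -/
structure SteinbergDatum (ι Q : Type*) [DecidableEq ι] [Group Q] where
  /-- The action on `ℤ^ι`. -/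
  ρ : Q →* Module.End ℤ (ι → ℤ)
  /-- The elementary elements; only `e i j` with `i ≠ j` matter. -/
  e : ι → ι → Q
  /-- The signed permutations. -/
  W : Subgroup Q
  ρ_e : ∀ i j, i ≠ j → ∀ v, ρ (e i j) v = v + Pi.single i (v j)
  /-- Elements of `W` act by signed permutations, and permute the `e i j` up to inversion
  accordingly. -/
  W_spec : ∀ w ∈ W, ∃ (σ : Equiv.Perm ι) (ε : ι → ℤˣ),
    (∀ v k, ρ w v (σ k) = ε k * v k) ∧
    ∀ i j, i ≠ j → w * e i j * w⁻¹ = e (σ i) (σ j) ^ ((ε i * ε j : ℤˣ) : ℤ)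
  W_inj : ∀ w ∈ W, ρ w = 1 → w = 1
  /-- `W` contains all diagonal sign matrices. -/
  exists_flip : ∀ ε : ι → ℤˣ, ∃ w ∈ W, ∀ v k, ρ w v k = ε k * v k
  comm : ∀ i j k l, i ≠ j → k ≠ l → j ≠ k → i ≠ l → Commute (e i j) (e k l)
  /-- Steinberg's commutator relation `[e i j, e j l] = e i l`. -/
  chain : ∀ i j l, i ≠ j → j ≠ l → i ≠ l → e i j * e j l = e j l * e i l * e i j
  /-- The rotation by a quarter turn in the plane of `i` and `j` is a signed permutation. -/
  rot : ∀ i j, i ≠ j → e i j * (e j i)⁻¹ * e i j ∈ W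

namespace SteinbergDatum

variable {ι Q : Type*} [DecidableEq ι] [Group Q] (X : SteinbergDatum ι Q)

lemma ρ_inv_apply (q : Q) (v : ι → ℤ) : X.ρ q⁻¹ (X.ρ q v) = v := by
  rw [← Module.End.mul_apply, ← map_mul, inv_mul_cancel, map_one, Module.End.one_apply]

lemma ρ_e_zpow {i j : ι} (h : i ≠ j) (n : ℤ) (v : ι → ℤ) :
    X.ρ (X.e i j ^ n) v = v + Pi.single i (n * v j) := by
  have h1 : ∀ v, X.ρ (X.e i j)⁻¹ v = v + Pi.single i (- v j) := by
    intro v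
    have := X.ρ_inv_apply (X.e i j) (v + Pi.single i (- v j))
    rw [X.ρ_e i j h] at this
    rw [← this]
    congr 1
    ext k
    by_cases hk : k = i
    · subst hk; simp [h.symm]
    · simp [hk, h.symm]
  induction n generalizing v with
  | zero => simp
  | succ n ih =>
    rw [zpow_add_one, map_mul, Module.End.mul_apply, X.ρ_e i j h, ih]
    ext k
    by_cases hk : k = i
    · subst hk; simp [h.symm]; ring
    · simp [hk]
  | pred n ih =>
    rw [zpow_sub_one, map_mul, Module.End.mul_apply, h1, ih]
    ext k
    by_cases hk : k = i
    · subst hk; simp [h.symm]; ring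
    · simp [hk]

/-- The signed permutations that only involve the coordinates in `A`. -/
def WA (A : Finset ι) : Subgroup Q where
  carrier := {w | w ∈ X.W ∧ ∀ k ∉ A, X.ρ w (Pi.single k 1) = Pi.single k 1}
  one_mem' := ⟨X.W.one_mem, fun k _ => by simp⟩
  mul_mem' := fun {a b} ha hb => ⟨X.W.mul_mem ha.1 hb.1, fun k hk => by
    rw [map_mul, Module.End.mul_apply, hb.2 k hk, ha.2 k hk]⟩
  inv_mem' := fun {a} ha => ⟨X.W.inv_mem ha.1, fun k hk => by
    have := X.ρ_inv_apply a (Pi.single k 1)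
    rwa [ha.2 k hk] at this⟩

lemma WA_spec {A : Finset ι} {w : Q} (hw : w ∈ X.WA A) : ∃ (σ : Equiv.Perm ι) (ε : ι → ℤˣ),
    (∀ v k, X.ρ w v (σ k) = ε k * v k) ∧
    (∀ i j, i ≠ j → w * X.e i j * w⁻¹ = X.e (σ i) (σ j) ^ ((ε i * ε j : ℤˣ) : ℤ)) ∧
    (∀ k ∉ A, σ k = k ∧ ε k = 1) ∧ ∀ k, σ k ∈ A ↔ k ∈ A := by
  obtain ⟨σ, ε, h1, h2⟩ := X.W_spec w hw.1
  have h3 : ∀ k ∉ A, σ k = k ∧ ε k = 1 := by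
    intro k hk
    have h := h1 (Pi.single k 1) k
    rw [hw.2 k hk] at h
    have h4 : σ k = k := by
      by_contra hne
      simp [hne] at h
      exact (ε k).ne_zero h.symm
    rw [h4] at h
    simp at h
    exact ⟨h4, Units.ext h.symm⟩
  refine ⟨σ, ε, h1, h2, h3, fun k => ⟨fun h => ?_, fun h => ?_⟩⟩
  · by_contra hk
    rw [(h3 k hk).1] at h
    exact hk h
  · by_contra hk
    exact hk (by rwa [σ.injective (h3 _ hk).1])

/-- The conjugation relation between signed permutations and powers of elementary elements. -/
lemma e_conj_zpow {i j i' j' : ι} {w : Q} {u : ℤ} (h : w * X.e i j * w⁻¹ = X.e i' j' ^ u) (δ : ℤ) :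
    w * X.e i j ^ δ = X.e i' j' ^ (u * δ) * w := by
  rw [zpow_mul, ← h, _root_.conj_zpow, inv_mul_cancel_right]

/-- The subgroup generated by the elementary elements and signed permutations that only involve the
coordinates in `A`. -/
def QA (A : Finset ι) : Subgroup Q :=
  Subgroup.closure ({q | ∃ i ∈ A, ∃ j ∈ A, i ≠ j ∧ q = X.e i j} ∪ X.WA A)

/-- The subgroup generated by those generators of `QA A` which fix the basis vector `ε_m`. Equality
with the stabilizer of `ε_m` in `QA A` follows from `D.of_mem_QA` and `D.unique`. -/
def SA (A : Finset ι) (m : ι) : Subgroup Q :=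
  Subgroup.closure ({q | ∃ i ∈ A, ∃ j ∈ A, i ≠ j ∧ j ≠ m ∧ q = X.e i j} ∪ X.WA (A.erase m))

/-- The image `q ε_m` of the `m`-th basis vector. -/
def vec (m : ι) (q : Q) : ι → ℤ := X.ρ q (Pi.single m 1)

lemma vec_mul (m : ι) (p q : Q) : X.vec m (p * q) = X.ρ p (X.vec m q) := by
  simp [vec]

lemma vec_e (m : ι) {i j : ι} (h : i ≠ j) (n : ℤ) (q : Q) (k : ι) :
    X.vec m (X.e i j ^ n * q) k =
      if k = i then X.vec m q i + n * X.vec m q j else X.vec m q k := by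
  rw [vec_mul, X.ρ_e_zpow h]
  by_cases hk : k = i
  · subst hk; simp
  · simp [hk]

lemma vec_SA {A : Finset ι} {m : ι} {s : Q} (hs : s ∈ X.SA A m) :
    X.vec m s = Pi.single m 1 := by
  induction hs using Subgroup.closure_induction with
  | mem x hx =>
    rcases hx with ⟨i, _, j, _, hij, hj, rfl⟩ | hx
    · simp [vec, X.ρ_e i j hij, hj]
    · exact hx.2 m (by simp)
  | one => simp [vec]
  | mul x y _ _ hx hy => rw [vec_mul, hy]; exact hx
  | inv x _ hx =>
    have := X.ρ_inv_apply x (Pi.single m 1)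
    rwa [← vec, hx] at this

/-- The elements `q` which a Euclidean algorithm on the vector `v = q ε_m` brings into
`WA A * SA A m`, the set of elements whose vector is visibly some `± ε_k`. A step is a left
multiplication by some `e i j ^ (± 1)` that lowers `|v i|` by exactly `|v j| ≠ 0`. -/
inductive D (A : Finset ι) (m : ι) : Q → Prop
  | base (w s : Q) : w ∈ X.WA A → s ∈ X.SA A m → D A m (w * s)
  | step (q : Q) (i j : ι) (δ : ℤˣ) : i ∈ A → j ∈ A → i ≠ j → X.vec m q j ≠ 0 →
      (X.vec m q i + δ * X.vec m q j).natAbs + (X.vec m q j).natAbs = (X.vec m q i).natAbs →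
      D A m (X.e i j ^ (δ : ℤ) * q) → D A m q

variable {X} {A : Finset ι} {m : ι}

lemma D.W_mul {q : Q} (h : X.D A m q) {w : Q} (hw : w ∈ X.WA A) : X.D A m (w * q) := by
  induction h with
  | base w' s hw' hs => rw [← mul_assoc]; exact .base _ _ (mul_mem hw hw') hs
  | step q i j δ hi hj hij h0 hlt _ ih =>
    obtain ⟨σ, ε, h1, h2, h3, h4⟩ := X.WA_spec hw
    refine .step _ (σ i) (σ j) (ε i * ε j * δ) ((h4 _).2 hi) ((h4 _).2 hj)
      (σ.injective.ne hij) ?_ ?_ ?_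
    · rw [vec_mul, h1]; exact mul_ne_zero (ε j).ne_zero h0
    · rw [vec_mul, h1, h1]
      rcases Int.units_eq_one_or (ε i) with h | h <;> rcases Int.units_eq_one_or (ε j) with h' | h'
        <;> rcases Int.units_eq_one_or δ with h5 | h5 <;> simp only [h, h', h5] at hlt ⊢ <;>
        push_cast at hlt ⊢ <;> omega
    · rw [← mul_assoc, X.e_conj_zpow (h2 i j hij), mul_assoc] at ih
      exact_mod_cast ih

lemma D.of_W_mul {q w : Q} (hw : w ∈ X.WA A) (h : X.D A m (w * q)) : X.D A m q := by
  simpa using h.W_mul (inv_mem hw)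

/-- Undoing a step preserves `D`: moves that raise `|v i|` by `|v j|` may be applied freely. -/
lemma D.up {q : Q} (h : X.D A m q) {i j : ι} (δ : ℤˣ) (hi : i ∈ A) (hj : j ∈ A) (hij : i ≠ j)
    (h0 : X.vec m q j ≠ 0)
    (hlt : (X.vec m q i).natAbs + (X.vec m q j).natAbs =
      (X.vec m q i + δ * X.vec m q j).natAbs) :
    X.D A m (X.e i j ^ (δ : ℤ) * q) := by
  refine .step _ i j (-δ) hi hj hij ?_ ?_ ?_
  · simpa [X.vec_e m hij, hij.symm] using h0
  · simp [X.vec_e m hij, hij.symm, hlt]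
  · simpa using h

lemma D.one : X.D A m 1 := by
  simpa using D.base (X := X) (A := A) (m := m) 1 1 (one_mem _) (one_mem _)

/-- The relation `chain`, with signs. -/
lemma chain_zpow {i j l : ι} (hij : i ≠ j) (hjl : j ≠ l) (hil : i ≠ l) (δ η : ℤˣ) :
    X.e i j ^ (δ : ℤ) * X.e j l ^ (η : ℤ) =
      X.e j l ^ (η : ℤ) * X.e i l ^ ((δ * η : ℤˣ) : ℤ) * X.e i j ^ (δ : ℤ) := by
  have h := X.chain i j l hij hjl hil
  have c1 := X.comm i l i j hil hij hil.symm hij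
  have c2 := X.comm i l j l hil hjl hjl.symm hil
  generalize X.e i j = a at *
  generalize X.e j l = b at *
  generalize X.e i l = c at *
  have h' : ∀ z : ℤ, a * b ^ z = (b * c) ^ z * a := by
    intro z
    have : a * b * a⁻¹ = b * c := by rw [h]; group
    rw [← this, _root_.conj_zpow]; group
  rcases Int.units_eq_one_or δ with rfl | rfl
  · rw [one_mul, Units.val_one, zpow_one, h', c2.symm.mul_zpow]
  · have h2 := h' η
    rw [c2.symm.mul_zpow] at h2
    have c3 := (c1.zpow_left (η : ℤ)).eq
    have c4 := (c2.symm.zpow_zpow (η : ℤ) (η : ℤ)).eq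
    simp only [neg_mul, one_mul, Units.val_neg, Units.val_one, zpow_neg, zpow_one]
    rw [inv_mul_eq_iff_eq_mul]
    generalize b ^ (η : ℤ) = b' at *
    generalize c ^ (η : ℤ) = c' at *
    calc b' = b' * c' * a * a⁻¹ * c'⁻¹ := by group
      _ = a * b' * (c' * a)⁻¹ := by rw [← h2]; group
      _ = a * b' * (a * c')⁻¹ := by rw [c3]
      _ = _ := by group

lemma comm_zpow {i j k l : ι} (hij : i ≠ j) (hkl : k ≠ l) (hjk : j ≠ k) (hil : i ≠ l) (δ η : ℤ) :
    X.e i j ^ δ * X.e k l ^ η = X.e k l ^ η * X.e i j ^ δ :=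
  ((X.comm i j k l hij hkl hjk hil).zpow_zpow δ η).eq

/-! ### Peak reduction -/

lemma vec_ep (m : ι) {i j : ι} (h : i ≠ j) (q : Q) (k : ι) :
    X.vec m (X.e i j * q) k = if k = i then X.vec m q i + X.vec m q j else X.vec m q k := by
  simpa using X.vec_e m h 1 q k

lemma vec_en (m : ι) {i j : ι} (h : i ≠ j) (q : Q) (k : ι) :
    X.vec m ((X.e i j)⁻¹ * q) k =
      if k = i then X.vec m q i - X.vec m q j else X.vec m q k := by
  simpa [sub_eq_add_neg] using X.vec_e m h (-1) q k

/-- The vector of a terminal element has at most one nonzero entry, so no step applies to it. -/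
lemma base_vec {w s : Q} (hw : w ∈ X.WA A) (hs : s ∈ X.SA A m) {i j : ι} (hij : i ≠ j)
    (hi : X.vec m (w * s) i ≠ 0) : X.vec m (w * s) j = 0 := by
  obtain ⟨σ, ε, h1, -, -, -⟩ := X.WA_spec hw
  have key : ∀ k, X.vec m (w * s) k = ε (σ.symm k) * (Pi.single m 1 : ι → ℤ) (σ.symm k) := by
    intro k
    rw [vec_mul, X.vec_SA hs]
    conv_lhs => rw [← σ.apply_symm_apply k]
    rw [h1]
  have him : σ.symm i = m := by
    by_contra hne
    exact hi (by rw [key, Pi.single_eq_of_ne hne, mul_zero])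
  rw [key, Pi.single_eq_of_ne (by rw [← him]; exact fun h => hij (σ.symm.injective h).symm),
    mul_zero]

section Confluence

variable [Fintype ι]

/-- The `ℓ¹`-norm of `q ε_m`. -/
def nrm (X : SteinbergDatum ι Q) (m : ι) (q : Q) : ℕ := ∑ k, (X.vec m q k).natAbs

lemma nrm_e {i j : ι} (h : i ≠ j) (n : ℤ) (q : Q) :
    X.nrm m (X.e i j ^ n * q) + (X.vec m q i).natAbs =
      X.nrm m q + (X.vec m q i + n * X.vec m q j).natAbs := by
  unfold nrm
  rw [← Finset.add_sum_erase _ _ (Finset.mem_univ i), ← Finset.add_sum_erase _ (fun k =>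
    (X.vec m q k).natAbs) (Finset.mem_univ i)]
  have : ∑ k ∈ Finset.univ.erase i, (X.vec m (X.e i j ^ n * q) k).natAbs =
      ∑ k ∈ Finset.univ.erase i, (X.vec m q k).natAbs :=
    Finset.sum_congr rfl fun k hk => by rw [X.vec_e m h, if_neg (Finset.ne_of_mem_erase hk)]
  rw [this, X.vec_e m h, if_pos rfl]
  omega

lemma nrm_ep {i j : ι} (h : i ≠ j) (q : Q) :
    X.nrm m (X.e i j * q) + (X.vec m q i).natAbs =
      X.nrm m q + (X.vec m q i + X.vec m q j).natAbs := by
  simpa using X.nrm_e (m := m) h 1 q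

lemma nrm_en {i j : ι} (h : i ≠ j) (q : Q) :
    X.nrm m ((X.e i j)⁻¹ * q) + (X.vec m q i).natAbs =
      X.nrm m q + (X.vec m q i - X.vec m q j).natAbs := by
  simpa [sub_eq_add_neg] using X.nrm_e (m := m) h (-1) q

lemma nrm_W {w : Q} (hw : w ∈ X.WA A) (q : Q) : X.nrm m (w * q) = X.nrm m q := by
  obtain ⟨σ, ε, h1, -, -, -⟩ := X.WA_spec hw
  unfold nrm
  rw [← Equiv.sum_comp σ]
  refine Finset.sum_congr rfl fun k _ => ?_
  rw [vec_mul, h1, Int.natAbs_mul]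
  rcases Int.units_eq_one_or (ε k) with h | h <;> simp [h]

variable (X A m) in
/-- `D` is stable under left multiplication of its elements of norm below `N` by elementary
elements. -/
def ClosedBelow (N : ℕ) : Prop := ∀ q, X.D A m q → X.nrm m q < N →
  ∀ i ∈ A, ∀ j ∈ A, i ≠ j → ∀ δ : ℤˣ, X.D A m (X.e i j ^ (δ : ℤ) * q)

lemma ClosedBelow.pos {N : ℕ} (H : ClosedBelow X A m N) {q : Q} (h : X.D A m q)
    {i j : ι} (hi : i ∈ A) (hj : j ∈ A) (hij : i ≠ j) (hN : X.nrm m q < N) :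
    X.D A m (X.e i j * q) := by
  simpa using H q h hN i hi j hj hij 1

lemma ClosedBelow.neg {N : ℕ} (H : ClosedBelow X A m N) {q : Q} (h : X.D A m q)
    {i j : ι} (hi : i ∈ A) (hj : j ∈ A) (hij : i ≠ j) (hN : X.nrm m q < N) :
    X.D A m ((X.e i j)⁻¹ * q) := by
  simpa using H q h hN i hi j hj hij (-1)

/-- Multiplication by `e i j ^ δ` preserves `D` when `v j = 0`: it then fixes the vector, and can be
absorbed into `SA A m` or moved past the first reducing step of `q`. -/
lemma closed_of_zero {N : ℕ} (H : ClosedBelow X A m N) {q : Q} (h : X.D A m q)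
    (hN : X.nrm m q = N) {i j : ι} (hi : i ∈ A) (hj : j ∈ A) (hij : i ≠ j) (δ : ℤˣ)
    (h0 : X.vec m q j = 0) : X.D A m (X.e i j ^ (δ : ℤ) * q) := by
  cases h with
  | base w s hw hs =>
    obtain ⟨σ, ε, h1, h2, h3, h4⟩ := X.WA_spec hw
    obtain ⟨i, rfl⟩ := σ.surjective i
    obtain ⟨j, rfl⟩ := σ.surjective j
    have hij' : i ≠ j := fun h => hij (by rw [h])
    have hjm : j ≠ m := by
      rintro rfl
      rw [vec_mul, h1, X.vec_SA hs] at h0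
      simp at h0
    have h5 := X.e_conj_zpow (h2 i j hij') ((ε i * ε j * δ : ℤˣ) : ℤ)
    rw [← Units.val_mul, ← mul_assoc, Int.units_mul_self, one_mul] at h5
    rw [← mul_assoc, ← h5, mul_assoc]
    have h6 : X.e i j ∈ X.SA A m := Subgroup.subset_closure
      (Or.inl ⟨i, (h4 i).1 hi, j, (h4 j).1 hj, hij', hjm, rfl⟩)
    exact .base _ _ hw (mul_mem (zpow_mem h6 _) hs)
  | step _ k l η hk hl hkl hl0 hlt hD =>
    have hjl : j ≠ l := by rintro rfl; exact hl0 h0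
    have hjk : j ≠ k := by
      rintro rfl
      rw [h0] at hlt
      omega
    have hlow : X.nrm m (X.e k l ^ (η : ℤ) * q) < N := by
      have := X.nrm_e (m := m) hkl η q
      omega
    -- the moves towards row `j` do not change the vector
    have hv : ∀ k', X.vec m (X.e i j ^ (δ : ℤ) * q) k' = X.vec m q k' := by
      intro k'
      rw [X.vec_e m hij, h0]
      split_ifs with hh <;> simp [hh]
    refine .step _ k l η hk hl hkl (by rwa [hv]) (by rwa [hv, hv]) ?_
    by_cases hil : i = l
    · subst hil
      rw [← mul_assoc, chain_zpow hkl hij hjk.symm, mul_assoc, mul_assoc]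
      refine H _ (H _ hD hlow _ hk _ hj hjk.symm _) ?_ _ hi _ hj hij _
      have := X.nrm_e (m := m) hjk.symm ((η * δ : ℤˣ) : ℤ) (X.e k i ^ (η : ℤ) * q)
      rw [X.vec_e m hkl, X.vec_e m hkl, if_pos rfl, if_neg hjk, h0] at this
      simp only [mul_zero, add_zero] at this
      omega
    · rw [← mul_assoc, X.comm_zpow hkl hij (Ne.symm hil) hjk.symm, mul_assoc]
      exact H _ hD hlow _ hi _ hj hij _

/-- Local confluence: if the vector of `q` is nonnegative and two reducing steps `(e i j)⁻¹` and
`(e k l)⁻¹` apply to `q`, then the relations join the two results by a path of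
elements whose norms are all below that of `q`. So, if `D` is stable at lower norms, one result lies in `D` when the
other does. -/
lemma confluence {N : ℕ} (H : ClosedBelow X A m N) {q : Q} (hN : X.nrm m q = N)
    (hpos : ∀ k ∈ A, 0 ≤ X.vec m q k) {i j k l : ι}
    (hi : i ∈ A) (hj : j ∈ A) (hij : i ≠ j) (hj0 : X.vec m q j ≠ 0)
    (hlt : X.vec m q j ≤ X.vec m q i) (hD : X.D A m ((X.e i j)⁻¹ * q))
    (hk : k ∈ A) (hl : l ∈ A) (hkl : k ≠ l) (hl0 : X.vec m q l ≠ 0)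
    (hlt' : X.vec m q l ≤ X.vec m q k) : X.D A m ((X.e k l)⁻¹ * q) := by
  have pi := hpos i hi
  have pj := hpos j hj
  have pk := hpos k hk
  have pl := hpos l hl
  have n1 := X.nrm_en (m := m) hij q
  have n2 := X.nrm_en (m := m) hkl q
  have hlow : X.nrm m ((X.e i j)⁻¹ * q) < N := by omega
  by_cases hjk : j = k
  · subst hjk
    by_cases hil : i = l
    · subst hil
      -- opposite steps: `v i = v j`, and the two results differ by the rotation
      have hw : X.e i j * (X.e j i)⁻¹ * X.e i j ∈ X.WA A := by
        refine ⟨X.rot i j hij, fun k hk' => ?_⟩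
        have hki : k ≠ i := by rintro rfl; exact hk' hi
        have hkj : k ≠ j := by rintro rfl; exact hk' hj
        have e1 := X.ρ_e_zpow hkl (-1) (Pi.single k 1)
        rw [zpow_neg_one] at e1
        rw [map_mul, map_mul, Module.End.mul_apply, Module.End.mul_apply, X.ρ_e i j hij]
        simp [hkj.symm, hki.symm, e1, X.ρ_e i j hij]
      have hrel : (X.e j i)⁻¹ * q = (X.e i j)⁻¹ *
          ((X.e i j * (X.e j i)⁻¹ * X.e i j) * ((X.e i j)⁻¹ * q)) := by group
      rw [hrel]
      refine H.neg (hD.W_mul hw) hi hj hij ?_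
      rwa [nrm_W hw]
    · have hrel : (X.e j l)⁻¹ * q = X.e i l * (X.e i j * ((X.e j l)⁻¹ * ((X.e i j)⁻¹ * q))) := by
        have c := chain_zpow (X := X) hij hkl hil 1 (-1)
        have c1 := X.comm_zpow hil hkl hkl.symm hil (-1) (-1)
        simp only [Units.val_one, zpow_one, one_mul, Units.val_neg, zpow_neg] at c c1
        have : X.e i j * ((X.e j l)⁻¹ * ((X.e i j)⁻¹ * q)) =
            (X.e i j * (X.e j l)⁻¹) * (X.e i j)⁻¹ * q := by group
        rw [this, c, ← c1]; group
      rw [hrel]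
      have m1 := X.nrm_en (m := m) hkl ((X.e i j)⁻¹ * q)
      have m2 := X.nrm_ep (m := m) hij ((X.e j l)⁻¹ * ((X.e i j)⁻¹ * q))
      have hli : l ≠ i := Ne.symm hil
      simp only [vec_en m hij, vec_en m hkl, hij, hij.symm, hkl, hkl.symm, hil, hli, if_true,
        if_false] at m1 m2
      exact H.pos (H.pos (H.neg hD hk hl hkl hlow) hi hj hij (by omega)) hi hl hil (by omega)
  by_cases hil : i = l
  · subst hil
    have hkj : k ≠ j := Ne.symm hjk
    have hrel : (X.e k i)⁻¹ * q = X.e i j * ((X.e k j)⁻¹ * ((X.e k i)⁻¹ * ((X.e i j)⁻¹ * q))) := by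
      have c := chain_zpow (X := X) hkl hij hkj (-1) (-1)
      have c1 := X.comm_zpow hkj hij hij.symm hkj (-1) 1
      simp only [Units.val_one, zpow_one, Units.val_neg, zpow_neg, mul_neg, mul_one, neg_neg]
        at c c1
      have : X.e i j * ((X.e k j)⁻¹ * ((X.e k i)⁻¹ * ((X.e i j)⁻¹ * q))) =
          X.e i j * (X.e k j)⁻¹ * ((X.e k i)⁻¹ * (X.e i j)⁻¹) * q := by group
      rw [this, c, ← c1]; group
    rw [hrel]
    have m1 := X.nrm_en (m := m) hkl ((X.e i j)⁻¹ * q)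
    have m2 := X.nrm_en (m := m) hkj ((X.e k i)⁻¹ * ((X.e i j)⁻¹ * q))
    simp only [vec_en m hij, vec_en m hkl, hij, hij.symm, hkl, hkl.symm, hkj, hjk, if_true,
      if_false] at m1 m2
    exact H.pos (H.neg (H.neg hD hk hi hkl hlow) hk hj hkj (by omega)) hi hj hij (by omega)
  -- If `v i = v j = v l`, commuting the steps would go through a vector with `i`-th entry `- v i`,
  -- which has norm `N` again; the detour through `e l j` stays below.
  by_cases hik : i = k ∧ j ≠ l ∧ X.vec m q i = X.vec m q j ∧ X.vec m q i = X.vec m q l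
  · obtain ⟨rfl, hjl, e1, e2⟩ := hik
    have hlj : l ≠ j := Ne.symm hjl
    have hrel : (X.e i l)⁻¹ * q =
        X.e l j * ((X.e i l)⁻¹ * ((X.e l j)⁻¹ * ((X.e i j)⁻¹ * q))) := by
      have c := chain_zpow (X := X) hkl hlj hij (-1) (-1)
      have c1 := X.comm_zpow hij hkl hij.symm hkl 1 (-1)
      simp only [Units.val_one, zpow_one, Units.val_neg, zpow_neg, mul_neg, mul_one, neg_neg]
        at c c1
      have : X.e l j * ((X.e i l)⁻¹ * ((X.e l j)⁻¹ * ((X.e i j)⁻¹ * q))) =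
          X.e l j * ((X.e i l)⁻¹ * (X.e l j)⁻¹) * (X.e i j)⁻¹ * q := by group
      rw [this, c, mul_assoc _ (X.e i j), c1]; group
    rw [hrel]
    have m1 := X.nrm_en (m := m) hlj ((X.e i j)⁻¹ * q)
    have m2 := X.nrm_en (m := m) hkl ((X.e l j)⁻¹ * ((X.e i j)⁻¹ * q))
    simp only [vec_en m hij, vec_en m hlj, hij, hij.symm, hkl, hkl.symm, hlj, hjl, if_true,
      if_false] at m1 m2
    exact H.pos (H.neg (H.neg hD hl hj hlj hlow) hi hl hkl (by omega)) hl hj hlj (by omega)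
  by_cases hsame : i = k ∧ j = l
  · obtain ⟨rfl, rfl⟩ := hsame; exact hD
  -- in the remaining cases the two steps commute
  have c := X.comm_zpow hij hkl hjk hil 1 (-1)
  simp only [zpow_one, zpow_neg] at c
  have hrel : (X.e k l)⁻¹ * q = X.e i j * ((X.e k l)⁻¹ * ((X.e i j)⁻¹ * q)) := by
    rw [← mul_assoc, c]; group
  rw [hrel]
  refine H.pos (H.neg hD hk hl hkl hlow) hi hj hij ?_
  have m1 := X.nrm_en (m := m) hkl ((X.e i j)⁻¹ * q)
  have hli : l ≠ i := Ne.symm hil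
  simp only [vec_en m hij, hli, if_false] at m1
  split_ifs at m1 with hki
  · subst hki
    have : j ≠ l := fun h => hsame ⟨rfl, h⟩
    have : ¬ (X.vec m q k = X.vec m q j ∧ X.vec m q k = X.vec m q l) := fun h =>
      hik ⟨rfl, this, h⟩
    omega
  · omega

/-- Multiplication by `e i j ^ δ` preserves `D` at norm `N` when the vector is nonnegative: the move
goes up, or down (and `confluence` applies), or takes `v i` to the negative entry `v i - v j`. -/
lemma closed_of_nonneg {N : ℕ} (H : ClosedBelow X A m N) {q : Q} (h : X.D A m q)
    (hN : X.nrm m q = N) (hpos : ∀ k ∈ A, 0 ≤ X.vec m q k) {i j : ι} (hi : i ∈ A) (hj : j ∈ A)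
    (hij : i ≠ j) (δ : ℤˣ) : X.D A m (X.e i j ^ (δ : ℤ) * q) := by
  have down : ∀ k l, k ∈ A → l ∈ A → k ≠ l → X.vec m q l ≠ 0 → X.vec m q l ≤ X.vec m q k →
      X.D A m ((X.e k l)⁻¹ * q) := by
    intro k l hk hl hkl hl0 hlt
    have pk := hpos k hk
    have pl := hpos l hl
    cases h with
    | base w s hw hs => exact absurd (base_vec hw hs hkl (by omega)) hl0
    | step _ i j η hi hj hij hj0 hlt' hD =>
      have pi := hpos i hi
      have pj := hpos j hj
      rcases Int.units_eq_one_or η with rfl | rfl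
      · simp only [Units.val_one, one_mul] at hlt'; omega
      · simp only [Units.val_neg, Units.val_one, zpow_neg, zpow_one, neg_mul, one_mul] at hlt' hD
        exact confluence H hN hpos hi hj hij hj0 (by omega) hD hk hl hkl hl0 hlt
  have pi := hpos i hi
  have pj := hpos j hj
  by_cases hj0 : X.vec m q j = 0
  · exact closed_of_zero H h hN hi hj hij δ hj0
  rcases Int.units_eq_one_or δ with rfl | rfl
  · refine h.up 1 hi hj hij hj0 ?_
    simp only [Units.val_one, one_mul]; omega
  by_cases hi0 : X.vec m q i = 0
  · refine h.up (-1) hi hj hij hj0 ?_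
    simp only [Units.val_neg, Units.val_one, neg_mul, one_mul]; omega
  simp only [Units.val_neg, Units.val_one, zpow_neg, zpow_one]
  by_cases hle : X.vec m q j ≤ X.vec m q i
  · exact down i j hi hj hij hj0 hle
  -- Now `0 < v i < v j`. The move is `(e j i)⁻¹`, which goes down, followed by a rotation and an
  -- upward move.
  have hw : X.e j i * (X.e i j)⁻¹ * X.e j i ∈ X.WA A := by
    refine ⟨X.rot j i hij.symm, fun k hk => ?_⟩
    have hki : k ≠ i := by rintro rfl; exact hk hi
    have hkj : k ≠ j := by rintro rfl; exact hk hj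
    have e1 := X.ρ_e_zpow hij (-1) (Pi.single k 1)
    rw [zpow_neg_one] at e1
    rw [map_mul, map_mul, Module.End.mul_apply, Module.End.mul_apply, X.ρ_e j i hij.symm]
    simp [hkj.symm, hki.symm, e1, X.ρ_e j i hij.symm]
  have hrel : (X.e i j)⁻¹ * q = X.e j i ^ (((-1 : ℤˣ)) : ℤ) *
      ((X.e j i * (X.e i j)⁻¹ * X.e j i) * ((X.e j i)⁻¹ * q)) := by
    simp only [Units.val_neg, Units.val_one, zpow_neg, zpow_one]; group
  rw [hrel]
  have vi : X.vec m ((X.e j i * (X.e i j)⁻¹ * X.e j i) * ((X.e j i)⁻¹ * q)) i =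
      X.vec m q i - X.vec m q j := by
    simp only [mul_assoc, vec_ep m hij.symm, vec_en m hij, vec_en m hij.symm, hij, hij.symm,
      if_true, if_false]
    omega
  have vj : X.vec m ((X.e j i * (X.e i j)⁻¹ * X.e j i) * ((X.e j i)⁻¹ * q)) j =
      X.vec m q i := by
    simp only [mul_assoc, vec_ep m hij.symm, vec_en m hij, vec_en m hij.symm, hij, hij.symm,
      if_true, if_false]
    omega
  refine ((down j i hj hi hij.symm hi0 (by omega)).W_mul hw).up (-1) hj hi hij.symm ?_ ?_
  · rw [vi]; omega
  · rw [vi, vj]; simp only [Units.val_neg, Units.val_one]; omega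

/-- `D` is stable under left multiplication by elementary elements. -/
lemma closedBelow (N : ℕ) : ClosedBelow X A m N := by
  induction N with
  | zero => intro q _ h; omega
  | succ N H =>
    intro q hq hN i hi j hj hij δ
    by_cases hlt : X.nrm m q < N
    · exact H q hq hlt i hi j hj hij δ
    have hN' : X.nrm m q = N := by omega
    -- a diagonal sign matrix moves `q ε_m` into the positive orthant
    obtain ⟨w, hw, hwv⟩ := X.exists_flip
      (fun k => if k ∈ A ∧ X.vec m q k < 0 then -1 else 1)
    have hwA : w ∈ X.WA A := by
      refine ⟨hw, fun k hk => ?_⟩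
      ext l
      rw [hwv]
      by_cases hlk : l = k
      · subst hlk; simp [hk]
      · simp [hlk]
    obtain ⟨σ, ε, h1, h2, -, h4⟩ := X.WA_spec hwA
    have hpos : ∀ k ∈ A, 0 ≤ X.vec m (w * q) k := by
      intro k hk
      rw [vec_mul, hwv]
      split_ifs with h
      · simp only [Units.val_neg, Units.val_one]; omega
      · have : ¬ X.vec m q k < 0 := fun h' => h ⟨hk, h'⟩
        simp only [Units.val_one, one_mul]
        exact not_lt.1 this
    refine D.of_W_mul hwA ?_
    rw [← mul_assoc, X.e_conj_zpow (h2 i j hij), mul_assoc, ← Units.val_mul]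
    exact closed_of_nonneg H (hq.W_mul hwA) (by rw [nrm_W hwA, hN']) hpos ((h4 i).2 hi)
      ((h4 j).2 hj) (σ.injective.ne hij) _

lemma D.e_mul {q : Q} (h : X.D A m q) {i j : ι} (hi : i ∈ A) (hj : j ∈ A) (hij : i ≠ j)
    (δ : ℤˣ) : X.D A m (X.e i j ^ (δ : ℤ) * q) :=
  closedBelow _ q h (Nat.lt_succ_self _) i hi j hj hij δ

/-- The Euclidean algorithm succeeds on every element of `QA A`. -/
lemma D.of_mem_QA {q : Q} (h : q ∈ X.QA A) : X.D A m q := by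
  induction h using Subgroup.closure_induction_left with
  | one => exact D.one
  | mul_left x hx y _ ih =>
    rcases hx with ⟨i, hi, j, hj, hij, rfl⟩ | hx
    · simpa using ih.e_mul hi hj hij 1
    · exact ih.W_mul hx
  | inv_mul_cancel x hx y _ ih =>
    rcases hx with ⟨i, hi, j, hj, hij, rfl⟩ | hx
    · simpa using ih.e_mul hi hj hij (-1)
    · exact ih.W_mul (inv_mem hx)

/-- Elements of `D` are determined modulo the stabilizer `SA` by the image of `ε_m`. -/
lemma D.unique {x y : Q} (hx : X.D A m x) (hy : X.D A m y) (h : X.vec m x = X.vec m y) :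
    x⁻¹ * y ∈ X.SA A m := by
  induction hx generalizing y with
  | base w s hw hs =>
    cases hy with
    | base w' s' hw' hs' =>
      rw [vec_mul, vec_mul, X.vec_SA hs, X.vec_SA hs'] at h
      have : w⁻¹ * w' ∈ X.WA (A.erase m) := by
        refine ⟨(mul_mem (inv_mem hw) hw').1, fun k hk => ?_⟩
        by_cases hkm : k = m
        · subst hkm
          rw [map_mul, Module.End.mul_apply, ← h, X.ρ_inv_apply]
        · exact (mul_mem (inv_mem hw) hw').2 k (fun hA => hk (Finset.mem_erase.2 ⟨hkm, hA⟩))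
      have h' : (w * s)⁻¹ * (w' * s') = s⁻¹ * (w⁻¹ * w') * s' := by group
      rw [h']
      exact mul_mem (mul_mem (inv_mem hs) (Subgroup.subset_closure (Or.inr this))) hs'
    | step _ i j δ hi hj hij hj0 hlt _ =>
      rw [← h] at hj0 hlt
      exact absurd (base_vec hw hs hij (by omega)) hj0
  | step q i j δ hi hj hij hj0 hlt _ ih =>
    have := ih (hy.e_mul hi hj hij δ) (by rw [vec_mul, vec_mul, h])
    convert this using 1
    group

end Confluence

/-! ### Stabilizers and the presentation of `GL_n(ℤ)` -/

/-- The subgroup generated by the elementary elements `e m j` with `j ∈ B`. -/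
def TA (X : SteinbergDatum ι Q) (B : Finset ι) (m : ι) : Subgroup Q :=
  Subgroup.closure {q | ∃ j ∈ B, m ≠ j ∧ q = X.e m j}

lemma ρ_QA_apply {B : Finset ι} {q : Q} (hq : q ∈ X.QA B) (v : ι → ℤ) {k : ι} (hk : k ∉ B) :
    X.ρ q v k = v k := by
  induction hq using Subgroup.closure_induction_left with
  | one => simp
  | mul_left x hx y _ ih =>
    rw [map_mul, Module.End.mul_apply, ← ih]
    rcases hx with ⟨i, hi, j, hj, hij, rfl⟩ | hx
    · have : k ≠ i := by rintro rfl; exact hk hi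
      simp [X.ρ_e i j hij, this]
    · obtain ⟨σ, ε, h1, -, h3, -⟩ := X.WA_spec hx
      have := h1 (X.ρ y v) k
      rw [(h3 k hk).1, (h3 k hk).2] at this
      simpa using this
  | inv_mul_cancel x hx y _ ih =>
    rw [map_mul, Module.End.mul_apply, ← ih]
    rcases hx with ⟨i, hi, j, hj, hij, rfl⟩ | hx
    · have : k ≠ i := by rintro rfl; exact hk hi
      have h := X.ρ_e_zpow hij (-1) (X.ρ y v)
      rw [zpow_neg_one] at h
      simp [h, this]
    · obtain ⟨σ, ε, h1, -, h3, -⟩ := X.WA_spec (inv_mem hx)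
      have := h1 (X.ρ y v) k
      rw [(h3 k hk).1, (h3 k hk).2] at this
      simpa using this

lemma TA_apply_ne {B : Finset ι} {t : Q} (ht : t ∈ X.TA B m) (v : ι → ℤ) {k : ι} (hk : k ≠ m) :
    X.ρ t v k = v k := by
  induction ht using Subgroup.closure_induction generalizing v with
  | mem x hx =>
    obtain ⟨j, _, hj, rfl⟩ := hx
    simp [X.ρ_e m j hj, hk]
  | one => simp
  | mul x y _ _ hx hy => rw [map_mul, Module.End.mul_apply, hx, hy]
  | inv x _ hx =>
    rw [← hx (X.ρ x⁻¹ v), ← Module.End.mul_apply, ← map_mul]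
    simp

lemma TA_apply_single {B : Finset ι} {t : Q} (ht : t ∈ X.TA B m) {k : ι} (hk : k ∉ B) :
    X.ρ t (Pi.single k 1) = Pi.single k 1 := by
  induction ht using Subgroup.closure_induction with
  | mem x hx =>
    obtain ⟨j, hj, hmj, rfl⟩ := hx
    have : j ≠ k := by rintro rfl; exact hk hj
    simp [X.ρ_e m j hmj, this]
  | one => simp
  | mul x y _ _ hx hy => rw [map_mul, Module.End.mul_apply, hy, hx]
  | inv x _ hx =>
    have := X.ρ_inv_apply x (Pi.single k 1)
    rwa [hx] at this

/-- The elements `e m j` generate a free abelian group, detected by `ρ`. -/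
lemma TA_inj (B : Finset ι) (hm : m ∉ B) : ∀ t ∈ X.TA B m, X.ρ t = 1 → t = 1 := by
  induction B using Finset.induction_on with
  | empty =>
    intro t ht _
    simpa [TA] using ht
  | insert j B hj ih =>
    have hmj : m ≠ j := by rintro rfl; exact hm (Finset.mem_insert_self _ _)
    have hmB : m ∉ B := fun h => hm (Finset.mem_insert_of_mem h)
    intro t ht hρ
    have hdec : ∃ a : ℤ, ∃ t' ∈ X.TA B m, t = X.e m j ^ a * t' := by
      clear hρ
      have hc : ∀ k, m ≠ k → ∀ a δ : ℤ, X.e m k ^ δ * X.e m j ^ a = X.e m j ^ a * X.e m k ^ δ :=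
        fun k hk a δ => comm_zpow hk hmj hk.symm hmj δ a
      have hgen : ∀ k ∈ B, m ≠ k → X.e m k ∈ X.TA B m := fun k hk hmk =>
        Subgroup.subset_closure ⟨k, hk, hmk, rfl⟩
      induction ht using Subgroup.closure_induction_left with
      | one => exact ⟨0, 1, one_mem _, by simp⟩
      | mul_left x hx y _ ih =>
        obtain ⟨k, hk, hmk, rfl⟩ := hx
        obtain ⟨a, t', ht', rfl⟩ := ih
        rcases Finset.mem_insert.1 hk with rfl | hk
        · exact ⟨a + 1, t', ht', by rw [add_comm, zpow_one_add, mul_assoc]⟩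
        · refine ⟨a, X.e m k * t', mul_mem (hgen k hk hmk) ht', ?_⟩
          have := hc k hmk a 1
          rw [zpow_one] at this
          rw [← mul_assoc, this, mul_assoc]
      | inv_mul_cancel x hx y _ ih =>
        obtain ⟨k, hk, hmk, rfl⟩ := hx
        obtain ⟨a, t', ht', rfl⟩ := ih
        rcases Finset.mem_insert.1 hk with rfl | hk
        · exact ⟨a - 1, t', ht', by rw [sub_eq_neg_add, zpow_add, zpow_neg_one, mul_assoc]⟩
        · refine ⟨a, (X.e m k)⁻¹ * t', mul_mem (inv_mem (hgen k hk hmk)) ht', ?_⟩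
          have := hc k hmk a (-1)
          rw [zpow_neg_one] at this
          rw [← mul_assoc, this, mul_assoc]
    obtain ⟨a, t', ht', rfl⟩ := hdec
    have ha : a = 0 := by
      have h := congrFun (congrArg (fun f => f (Pi.single j 1)) hρ) m
      simp only [map_mul, Module.End.mul_apply, TA_apply_single ht' hj, X.ρ_e_zpow hmj] at h
      simpa [hmj] using h
    subst ha
    rw [zpow_zero, one_mul] at hρ ⊢
    exact ih hmB t' ht' hρ

/-- `QA B` normalizes `TA B m`. -/
lemma conj_TA {B : Finset ι} (hm : m ∉ B) {q t : Q} (hq : q ∈ X.QA B) (ht : t ∈ X.TA B m) :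
    q * t * q⁻¹ ∈ X.TA B m := by
  have hgen : ∀ k ∈ B, X.e m k ∈ X.TA B m := fun k hk =>
    Subgroup.subset_closure ⟨k, hk, by rintro rfl; exact hm hk, rfl⟩
  -- it suffices to treat generators
  have hred : ∀ x : Q, (∀ k ∈ B, x * X.e m k * x⁻¹ ∈ X.TA B m) → ∀ t ∈ X.TA B m,
      x * t * x⁻¹ ∈ X.TA B m := by
    intro x hx t ht
    induction ht using Subgroup.closure_induction with
    | mem y hy => obtain ⟨k, hk, _, rfl⟩ := hy; exact hx k hk
    | one => simp
    | mul y z _ _ hy hz =>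
      have : x * (y * z) * x⁻¹ = x * y * x⁻¹ * (x * z * x⁻¹) := by group
      rw [this]; exact mul_mem hy hz
    | inv y _ hy =>
      have : x * y⁻¹ * x⁻¹ = (x * y * x⁻¹)⁻¹ := by group
      rw [this]; exact inv_mem hy
  have he : ∀ i ∈ B, ∀ j ∈ B, i ≠ j → ∀ δ : ℤˣ, ∀ t ∈ X.TA B m,
      X.e i j ^ (δ : ℤ) * t * (X.e i j ^ (δ : ℤ))⁻¹ ∈ X.TA B m := by
    intro i hi j hj hij δ
    refine hred _ fun k hk => ?_
    have hmi : m ≠ i := by rintro rfl; exact hm hi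
    have hmj : m ≠ j := by rintro rfl; exact hm hj
    have hmk : m ≠ k := by rintro rfl; exact hm hk
    by_cases hik : i = k
    · subst hik
      have c := chain_zpow (X := X) hmi hij hmj 1 δ
      have : X.e i j ^ (δ : ℤ) * X.e m i * (X.e i j ^ (δ : ℤ))⁻¹ =
          (X.e m j ^ (δ : ℤ))⁻¹ * X.e m i := by
        have c1 := comm_zpow (X := X) hij hmj hmj.symm hij (δ : ℤ) (δ : ℤ)
        simp only [Units.val_one, zpow_one, one_mul] at c
        rw [c1] at c
        rw [mul_inv_eq_iff_eq_mul, mul_assoc, c]; group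
      rw [this]
      exact mul_mem (inv_mem (zpow_mem (hgen j hj) _)) (hgen i hi)
    · have c := comm_zpow (X := X) hij hmk hmj.symm hik (δ : ℤ) 1
      rw [zpow_one] at c
      rw [c, mul_inv_cancel_right]
      exact hgen k hk
  have hw : ∀ w ∈ X.WA B, ∀ t ∈ X.TA B m, w * t * w⁻¹ ∈ X.TA B m := by
    intro w hw
    obtain ⟨σ, ε, -, h2, h3, h4⟩ := X.WA_spec hw
    refine hred _ fun k hk => ?_
    have hmk : m ≠ k := by rintro rfl; exact hm hk
    rw [h2 m k hmk, (h3 m hm).1]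
    exact zpow_mem (hgen _ ((h4 k).2 hk)) _
  induction hq using Subgroup.closure_induction_left with
  | one => simpa using ht
  | mul_left x hx y _ ih =>
    have : x * y * t * (x * y)⁻¹ = x * (y * t * y⁻¹) * x⁻¹ := by group
    rw [this]
    rcases hx with ⟨i, hi, j, hj, hij, rfl⟩ | hx
    · simpa using he i hi j hj hij 1 _ ih
    · exact hw x hx _ ih
  | inv_mul_cancel x hx y _ ih =>
    have : x⁻¹ * y * t * (x⁻¹ * y)⁻¹ = x⁻¹ * (y * t * y⁻¹) * x⁻¹⁻¹ := by group
    rw [this]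
    rcases hx with ⟨i, hi, j, hj, hij, rfl⟩ | hx
    · simpa using he i hi j hj hij (-1) _ ih
    · exact hw x⁻¹ (inv_mem hx) _ ih

/-- The stabilizer of `ε_m` is the product of its translations `TA B m` and the group `QA B` on the
remaining coordinates. -/
lemma SA_decomp {B : Finset ι} (hm : m ∉ B) {s : Q} (hs : s ∈ X.SA (insert m B) m) :
    ∃ t ∈ X.TA B m, ∃ q ∈ X.QA B, s = t * q := by
  have hmem : ∀ x ∈ {q | ∃ i ∈ insert m B, ∃ j ∈ insert m B, i ≠ j ∧ j ≠ m ∧ q = X.e i j} ∪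
      (X.WA ((insert m B).erase m) : Set Q), x ∈ X.TA B m ∨ x ∈ X.QA B := by
    rintro x (⟨i, hi, j, hj, hij, hjm, rfl⟩ | hx)
    · have hjB : j ∈ B := (Finset.mem_insert.1 hj).resolve_left hjm
      rcases Finset.mem_insert.1 hi with rfl | hi
      · exact Or.inl (Subgroup.subset_closure ⟨j, hjB, hij, rfl⟩)
      · exact Or.inr (Subgroup.subset_closure (Or.inl ⟨i, hi, j, hjB, hij, rfl⟩))
    · rw [Finset.erase_insert hm] at hx
      exact Or.inr (Subgroup.subset_closure (Or.inr hx))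
  have hstep : ∀ x, x ∈ X.TA B m ∨ x ∈ X.QA B → ∀ y, (∃ t ∈ X.TA B m, ∃ q ∈ X.QA B, y = t * q) →
      ∃ t ∈ X.TA B m, ∃ q ∈ X.QA B, x * y = t * q := by
    rintro x (hx | hx) _ ⟨t, ht, q, hq, rfl⟩
    · exact ⟨x * t, mul_mem hx ht, q, hq, by group⟩
    · exact ⟨x * t * x⁻¹, conj_TA hm hx ht, x * q, mul_mem hx hq, by group⟩
  induction hs using Subgroup.closure_induction_left with
  | one => exact ⟨1, one_mem _, 1, one_mem _, by simp⟩
  | mul_left x hx y _ ih => exact hstep x (hmem x hx) y ih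
  | inv_mul_cancel x hx y _ ih =>
    exact hstep x⁻¹ ((hmem x hx).imp (fun h => inv_mem h) (fun h => inv_mem h)) y ih

/-- The action `ρ` is faithful on each `QA A`. For `A` the set of all coordinates this says that the
relations of a `SteinbergDatum` present `GL_n(ℤ)`. -/
theorem ρ_injOn [Fintype ι] (A : Finset ι) : ∀ q ∈ X.QA A, X.ρ q = 1 → q = 1 := by
  induction A using Finset.induction_on with
  | empty =>
    intro q hq hρ
    have : X.QA ∅ ≤ X.WA ∅ := by
      refine (Subgroup.closure_le _).2 ?_
      rintro x (⟨i, hi, _⟩ | hx)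
      · simp at hi
      · exact hx
    exact X.W_inj q (this hq).1 hρ
  | insert m B hm ih =>
    intro q hq hρ
    have hS : q ∈ X.SA (insert m B) m := by
      simpa using (D.one (X := X)).unique (D.of_mem_QA hq) (m := m) (by simp [vec, hρ])
    obtain ⟨t, ht, p, hp, rfl⟩ := SA_decomp hm hS
    -- `t` changes only the `m`-th coordinate of a vector, and `p` does not change it
    have hp1 : X.ρ p = 1 := by
      refine LinearMap.ext fun v => funext fun k => ?_
      by_cases hk : k = m
      · subst hk; exact ρ_QA_apply hp v hm
      · rw [← TA_apply_ne ht (X.ρ p v) hk, ← Module.End.mul_apply, ← map_mul, hρ]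
    have ht1 : X.ρ t = 1 := by rw [map_mul, hp1, mul_one] at hρ; exact hρ
    rw [ih p hp hp1, TA_inj B hm t ht ht1, one_mul]

end SteinbergDatum

/-! ### Words: cancellation in products, and a tie-break between words of equal length -/

namespace Nielsen

open FreeGroup hiding map_mul map_inv map_one

section Lcp
variable {β : Type*} [DecidableEq β]

/-- Length of the longest common prefix of two lists. -/
def lcp : List β → List β → ℕ
  | [], _ => 0
  | _ :: _, [] => 0
  | a :: A, b :: B => if a = b then lcp A B + 1 else 0

@[simp] theorem lcp_nil_left (B : List β) : lcp [] B = 0 := by simp [lcp]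

@[simp] theorem lcp_nil_right (A : List β) : lcp A [] = 0 := by cases A <;> simp [lcp]

theorem lcp_comm (A B : List β) : lcp A B = lcp B A := by
  induction A generalizing B with
  | nil => simp
  | cons a A ih =>
    cases B with
    | nil => simp
    | cons b B => simp only [lcp, ih B, eq_comm]

/-- Common prefixes behave like an ultrametric: of `lcp A B`, `lcp B C` and `lcp A C`, the
smallest value is taken twice. -/
theorem lcp_ultra (A B C : List β) (h : lcp A B < lcp B C) : lcp A C = lcp A B := by
  induction A generalizing B C with
  | nil => simp
  | cons a A ih =>
    cases B with
    | nil => simp at h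
    | cons b B =>
      cases C with
      | nil => simp at h
      | cons c C =>
        simp only [lcp] at h ⊢
        by_cases hbc : b = c
        · subst hbc
          by_cases hab : a = b
          · simp only [hab, if_true] at h ⊢
            rw [ih B C (by omega)]
          · simp [hab]
        · simp [hbc] at h

end Lcp

section Code
variable {α : Type*} [Fintype α]

/-- The lexicographic rank of a word, for some ordering of the letters: the first letter is the most
significant digit. It compares words of equal length. -/
noncomputable def code (L : List (α × Bool)) : ℕ :=
  Nat.ofDigits (Fintype.card (α × Bool) + 2)
    (L.reverse.map fun x => (Fintype.equivFin (α × Bool) x : ℕ))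

theorem code_append (P T : List (α × Bool)) :
    code (P ++ T) = code T + (Fintype.card (α × Bool) + 2) ^ T.length * code P := by
  simp [code, Nat.ofDigits_append]

theorem code_inj {P T : List (α × Bool)} (hl : P.length = T.length) (h : code P = code T) :
    P = T := by
  have h1 := Nat.ofDigits_inj_of_len_eq (b := Fintype.card (α × Bool) + 2) (by omega)
    (L1 := P.reverse.map fun x => (Fintype.equivFin (α × Bool) x : ℕ))
    (L2 := T.reverse.map fun x => (Fintype.equivFin (α × Bool) x : ℕ))
    (by simpa using hl)
    (by
      intro l hl
      obtain ⟨x, -, rfl⟩ := List.mem_map.1 hl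
      have := (Fintype.equivFin (α × Bool) x).2
      omega)
    (by
      intro l hl
      obtain ⟨x, -, rfl⟩ := List.mem_map.1 hl
      have := (Fintype.equivFin (α × Bool) x).2
      omega) h
  have h2 : Function.Injective fun x : α × Bool => (Fintype.equivFin (α × Bool) x : ℕ) :=
    Fin.val_injective.comp (Fintype.equivFin (α × Bool)).injective
  exact List.reverse_injective (List.map_injective_iff.2 h2 h1)

end Code

variable {α : Type*} [DecidableEq α]

theorem isReduced_invRev {A : List (α × Bool)} (h : IsReduced A) : IsReduced (invRev A) := by
  rw [isReduced_iff_reduce_eq] at h ⊢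
  rw [reduce_invRev, h]

/-- Two reduced words `A`, `B` split off their longest common prefix, after which `A⁻¹ B` is reduced
as written. -/
theorem lcp_decomp (A B : List (α × Bool)) (hA : IsReduced A) (hB : IsReduced B) :
    ∃ P A' B', A = P ++ A' ∧ B = P ++ B' ∧ P.length = lcp A B ∧ IsReduced (invRev A' ++ B') := by
  induction A generalizing B with
  | nil => exact ⟨[], [], B, by simp, by simp, by simp, by simpa using hB⟩
  | cons a A ih =>
    cases B with
    | nil => exact ⟨[], a :: A, [], by simp, by simp, by simp, by
        simpa using isReduced_invRev hA⟩
    | cons b B =>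
      by_cases hab : a = b
      · subst hab
        obtain ⟨P, A', B', h1, h2, h3, h4⟩ := ih B hA.tail hB.tail
        exact ⟨a :: P, A', B', by simp [h1], by simp [h2], by simp [lcp, h3], h4⟩
      · refine ⟨[], a :: A, b :: B, by simp, by simp, by simp [lcp, hab], ?_⟩
        refine List.isChain_append.2 ⟨isReduced_invRev hA, hB, ?_⟩
        intro x hx y hy
        have hx' : (a.1, !a.2) = x := by simpa [invRev] using hx
        have hy' : b = y := by simpa using hy
        subst hx' hy'
        intro h
        have : a.2 ≠ b.2 := fun h2 => hab (Prod.ext h h2)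
        cases h3 : a.2 <;> cases h4 : b.2 <;> simp_all

/-- The number of letters of `u` (equivalently of `v`) that cancel in the product `u * v`. -/
def canc (u v : FreeGroup α) : ℕ := lcp u⁻¹.toWord v.toWord

theorem canc_decomp (u v : FreeGroup α) : ∃ P A B, u⁻¹.toWord = P ++ A ∧ v.toWord = P ++ B ∧
    P.length = canc u v ∧ (u * v).toWord = invRev A ++ B := by
  obtain ⟨P, A, B, h1, h2, h3, h4⟩ := lcp_decomp u⁻¹.toWord v.toWord isReduced_toWord
    isReduced_toWord
  refine ⟨P, A, B, h1, h2, h3, ?_⟩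
  have hu : u = (mk P * mk A)⁻¹ := by
    rw [mul_mk, ← h1, mk_toWord, inv_inv]
  have hv : v = mk P * mk B := by rw [mul_mk, ← h2, mk_toWord]
  have : u * v = mk (invRev A ++ B) := by
    rw [hu, hv, ← mul_mk, ← inv_mk]; group
  rw [this, toWord_mk, h4.reduce_eq]

theorem norm_mul_add (u v : FreeGroup α) :
    norm (u * v) + 2 * canc u v = norm u + norm v := by
  obtain ⟨P, A, B, h1, h2, h3, h4⟩ := canc_decomp u v
  have hu : norm u = P.length + A.length := by
    rw [← norm_inv_eq, FreeGroup.norm, h1, List.length_append]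
  have hv : norm v = P.length + B.length := by rw [FreeGroup.norm, h2, List.length_append]
  have hw : norm (u * v) = A.length + B.length := by
    rw [FreeGroup.norm, h4, List.length_append, invRev_length]
  omega

theorem canc_inv (u v : FreeGroup α) : canc v⁻¹ u⁻¹ = canc u v := by
  rw [canc, canc, inv_inv, lcp_comm]

/-- Free groups are torsion-free in a strong sense: squaring makes a nontrivial word longer. -/
theorem norm_lt_norm_sq (v : FreeGroup α) (hv : v ≠ 1) : norm v < norm (v * v) := by
  have h1 := reduceCyclically.conj_conjugator_reduceCyclically v.toWord
  have h2 := reduceCyclically.reduce_flatten_replicate_succ (isReduced_toWord (x := v)) 1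
  have h3 : norm v = (reduceCyclically.conjugator v.toWord).length +
      (reduceCyclically v.toWord).length +
      (reduceCyclically.conjugator v.toWord).length := by
    conv_lhs => rw [FreeGroup.norm, ← h1]
    simp; ring
  have h4 : norm (v * v) = (reduceCyclically.conjugator v.toWord).length +
      ((reduceCyclically v.toWord).length + (reduceCyclically v.toWord).length) +
      (reduceCyclically.conjugator v.toWord).length := by
    rw [FreeGroup.norm, toWord_mul]
    have : (List.replicate (1 + 1) v.toWord).flatten = v.toWord ++ v.toWord := by
      simp [List.replicate]
    rw [this] at h2
    rw [h2]
    simp [List.replicate]; ring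
  have h5 : (reduceCyclically v.toWord).length ≠ 0 := by
    intro h
    have h6 := List.length_eq_zero_iff.1 h
    rw [h6] at h1
    apply hv
    rw [← mk_toWord (x := v), ← h1]
    simp only [List.append_nil, ← mul_mk, ← inv_mk, mul_inv_cancel]
  omega

section Mu
variable [Fintype α]

/-- The secondary complexity of an element: the rank of the initial half of its reduced word plus
that of the initial half of the word of its inverse. -/
noncomputable def mu (u : FreeGroup α) : ℕ :=
  code (u.toWord.take ((norm u + 1) / 2)) + code (u⁻¹.toWord.take ((norm u + 1) / 2))

theorem mu_inv (u : FreeGroup α) : mu u⁻¹ = mu u := by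
  rw [mu, mu, norm_inv_eq, inv_inv, add_comm]

/-- If exactly half of `v` cancels in `u * v`, then passing from `u` to `u * v` keeps the length
and replaces the initial half of `v` inside `u⁻¹` by the initial half of `v⁻¹`. This lowers `mu` if
the latter half has the smaller rank. -/
theorem mu_mul_lt {u v : FreeGroup α} {k : ℕ} (hv : norm v = 2 * k) (hu : 2 * k ≤ norm u)
    (hc : canc u v = k) (hcode : code (v⁻¹.toWord.take k) < code (v.toWord.take k)) :
    norm (u * v) = norm u ∧ mu (u * v) < mu u := by
  have hn := norm_mul_add u v
  have hn' : norm (u * v) = norm u := by omega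
  refine ⟨hn', ?_⟩
  obtain ⟨P, A, B, h1, h2, h3, h4⟩ := canc_decomp u v
  have hP : P.length = k := h3.trans hc
  have hul : norm u = P.length + A.length := by
    rw [← norm_inv_eq, FreeGroup.norm, h1, List.length_append]
  have hvl : norm v = P.length + B.length := by rw [FreeGroup.norm, h2, List.length_append]
  have hB : B.length = k := by omega
  have hu' : u.toWord = invRev A ++ invRev P := by
    rw [← inv_inv u, toWord_inv, h1, invRev_append]
  have hv' : v⁻¹.toWord = invRev B ++ invRev P := by
    rw [toWord_inv, h2, invRev_append]
  have hw' : (u * v)⁻¹.toWord = invRev B ++ A := by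
    rw [toWord_inv, h4, invRev_append, invRev_invRev]
  rw [hv', h2, List.take_left' (by simpa using hB), List.take_left' hP] at hcode
  rw [mu, mu, hn', hw', h1, hu', h4]
  have hA : k ≤ A.length := by omega
  set m := (norm u + 1) / 2
  rw [List.take_append_of_le_length (l₁ := invRev A) (by rw [invRev_length]; omega),
    List.take_append_of_le_length (l₁ := invRev A) (by rw [invRev_length]; omega),
    List.take_append, List.take_append, List.take_of_length_le (l := invRev B)
      (by rw [invRev_length]; omega), List.take_of_length_le (l := P) (by omega),
    code_append, code_append, invRev_length, hB, hP]
  gcongr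

end Mu

end Nielsen

/-! ### Nielsen's theorem: signed permutations and transvections generate `Aut(F)` -/

namespace Nielsen

open FreeGroup hiding map_mul map_inv map_one

section Generators
variable {α : Type*}

theorem aut_ext {f h : MulAut (FreeGroup α)} (H : ∀ k, f (of k) = h (of k)) : f = h := by
  apply MulEquiv.toMonoidHom_injective
  exact FreeGroup.ext_hom _ _ H

/-- The signed permutations: automorphisms permuting the generators up to inversion. -/
def SP (α : Type*) : Subgroup (MulAut (FreeGroup α)) where
  carrier := {f | ∃ (σ : Equiv.Perm α) (ε : α → ℤˣ), ∀ i, f (of i) = of (σ i) ^ (ε i : ℤ)}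
  one_mem' := ⟨1, 1, fun i => by simp⟩
  mul_mem' := by
    rintro f h ⟨σ, ε, hf⟩ ⟨τ, δ, hh⟩
    refine ⟨σ * τ, fun i => ε (τ i) * δ i, fun i => ?_⟩
    rw [MulAut.mul_apply, hh, map_zpow, hf, ← zpow_mul]
    simp
  inv_mem' := by
    rintro f ⟨σ, ε, hf⟩
    refine ⟨σ⁻¹, fun i => ε (σ⁻¹ i), fun i => ?_⟩
    rw [MulAut.inv_apply, MulEquiv.symm_apply_eq, map_zpow, hf, ← zpow_mul, ← Units.val_mul,
      Int.units_mul_self]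
    simp

/-- The automorphism inverting the generators on which `ε` is `-1`. -/
def flip (ε : α → ℤˣ) : MulAut (FreeGroup α) :=
  MonoidHom.toMulEquiv (lift fun k => of k ^ (ε k : ℤ)) (lift fun k => of k ^ (ε k : ℤ))
    (by ext k; simp [← zpow_mul, ← Units.val_mul, Int.units_mul_self])
    (by ext k; simp [← zpow_mul, ← Units.val_mul, Int.units_mul_self])

@[simp] theorem flip_of (ε : α → ℤˣ) (k : α) : flip ε (of k) = of k ^ (ε k : ℤ) := by
  simp [flip]

theorem flip_mem (ε : α → ℤˣ) : flip ε ∈ SP α := ⟨1, ε, fun i => by simp⟩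

theorem flip_inv (ε : α → ℤˣ) : (flip ε)⁻¹ = flip ε := by
  rw [inv_eq_iff_mul_eq_one]
  apply aut_ext
  intro k
  simp [← zpow_mul, ← Units.val_mul, Int.units_mul_self]

variable [DecidableEq α]

/-- The right transvection `x_j ↦ x_j x_i` (the identity if `i = j`). -/
def R (i j : α) : MulAut (FreeGroup α) :=
  if h : i = j then 1 else
  MonoidHom.toMulEquiv (lift fun k => if k = j then of j * of i else of k)
    (lift fun k => if k = j then of j * (of i)⁻¹ else of k)
    (by ext k; by_cases hk : k = j <;> simp [hk, h])
    (by ext k; by_cases hk : k = j <;> simp [hk, h])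

/-- The left transvection `x_j ↦ x_i x_j` (the identity if `i = j`). -/
def L (i j : α) : MulAut (FreeGroup α) :=
  if h : i = j then 1 else
  MonoidHom.toMulEquiv (lift fun k => if k = j then of i * of j else of k)
    (lift fun k => if k = j then (of i)⁻¹ * of j else of k)
    (by ext k; by_cases hk : k = j <;> simp [hk, h])
    (by ext k; by_cases hk : k = j <;> simp [hk, h])

variable {i j k : α}

theorem R_of (h : i ≠ j) (k : α) : R i j (of k) = if k = j then of j * of i else of k := by
  simp [R, h]

theorem L_of (h : i ≠ j) (k : α) : L i j (of k) = if k = j then of i * of j else of k := by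
  simp [L, h]

theorem R_inv_of (h : i ≠ j) (k : α) :
    (R i j)⁻¹ (of k) = if k = j then of j * (of i)⁻¹ else of k := by
  rw [MulAut.inv_apply, MulEquiv.symm_apply_eq]
  by_cases hk : k = j <;> simp [hk, R_of h, h]

theorem L_inv_of (h : i ≠ j) (k : α) :
    (L i j)⁻¹ (of k) = if k = j then (of i)⁻¹ * of j else of k := by
  rw [MulAut.inv_apply, MulEquiv.symm_apply_eq]
  by_cases hk : k = j <;> simp [hk, L_of h, h]

theorem R_symm_of (h : i ≠ j) (k : α) :
    (R i j).symm (of k) = if k = j then of j * (of i)⁻¹ else of k := R_inv_of h k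

theorem L_symm_of (h : i ≠ j) (k : α) :
    (L i j).symm (of k) = if k = j then (of i)⁻¹ * of j else of k := L_inv_of h k

/-- The subgroup generated by signed permutations and right transvections. -/
def E (α : Type*) [DecidableEq α] : Subgroup (MulAut (FreeGroup α)) :=
  Subgroup.closure ({f | ∃ i j : α, i ≠ j ∧ f = R i j} ∪ SP α)

theorem R_mem_E (h : i ≠ j) : R i j ∈ E α := Subgroup.subset_closure (Or.inl ⟨i, j, h, rfl⟩)

theorem SP_le_E : SP α ≤ E α := fun _ hf => Subgroup.subset_closure (Or.inr hf)

theorem mk_true (i : α) : mk [(i, true)] = of i := rfl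

theorem mk_false (i : α) : mk [(i, false)] = (of i)⁻¹ := rfl

/-- The elementary Nielsen move multiplying the letter `s` on the right by the letter `t` is in `E`;
both letters may be inverses of generators. -/
theorem exists_nielsen (s t : α × Bool) (h : s.1 ≠ t.1) :
    ∃ n ∈ E α, n (mk [s]) = mk [s] * mk [t] ∧ ∀ k, k ≠ s.1 → n (of k) = of k := by
  obtain ⟨i, b⟩ := s
  obtain ⟨j, c⟩ := t
  simp only at h
  obtain ⟨r, hr, hri, hrk⟩ : ∃ r ∈ E α, r (of i) = of i * mk [(j, c)] ∧
      ∀ k, k ≠ i → r (of k) = of k := by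
    cases c with
    | true => exact ⟨R j i, R_mem_E h.symm, by simp [R_of h.symm, mk_true], fun k hk => by
        simp [R_of h.symm, hk]⟩
    | false => exact ⟨(R j i)⁻¹, inv_mem (R_mem_E h.symm), by
        simp only [R_inv_of h.symm, mk_false, if_true], fun k hk => by
        simp only [R_inv_of h.symm, hk, if_false]⟩
  cases b with
  | true => exact ⟨r, hr, hri, hrk⟩
  | false =>
    set φ : MulAut (FreeGroup α) := flip (fun k => if k = i then -1 else 1) with hφ
    have hφE : φ ∈ E α := SP_le_E (flip_mem _)
    have hφi : φ (of i) = (of i)⁻¹ := by simp [hφ]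
    have hφk : ∀ k, k ≠ i → φ (of k) = of k := fun k hk => by simp [hφ, hk]
    have hφm : φ (mk [(j, c)]) = mk [(j, c)] := by
      cases c
      · rw [mk_false, map_inv, hφk j h.symm]
      · rw [mk_true, hφk j h.symm]
    refine ⟨φ * r * φ, mul_mem (mul_mem hφE hr) hφE, ?_, fun k hk => ?_⟩
    · simp only [mk_false, MulAut.mul_apply, map_inv, hφi, hri, inv_inv, map_mul, hφm]
    · simp only [MulAut.mul_apply, hφk k hk, hrk k hk]

end Generators

variable {α : Type*} [DecidableEq α]

/-- Minimality of the tuple of images of the generators under elementary Nielsen moves. -/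
def Reduced [Fintype α] (h : MulAut (FreeGroup α)) : Prop :=
  ∀ s t : α × Bool, s.1 ≠ t.1 →
    norm (h (mk [s])) < norm (h (mk [s]) * h (mk [t])) ∨
    norm (h (mk [s])) = norm (h (mk [s]) * h (mk [t])) ∧
      mu (h (mk [s])) ≤ mu (h (mk [s]) * h (mk [t]))

/-- Every coset of `E` contains an automorphism minimal under elementary Nielsen moves, since length
and then `mu` can decrease only finitely often. -/
theorem exists_reduced [Fintype α] (f : MulAut (FreeGroup α)) :
    ∃ h, f⁻¹ * h ∈ E α ∧ Reduced h := by
  let Φ : MulAut (FreeGroup α) → ℕ ×ₗ ℕ := fun h =>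
    toLex (∑ i, norm (h (of i)), ∑ i, mu (h (of i)))
  obtain ⟨h, hh, hmin⟩ := WellFounded.has_min (InvImage.wf Φ wellFounded_lt)
    {h | f⁻¹ * h ∈ E α} ⟨f, by simp [one_mem]⟩
  refine ⟨h, hh, fun s t hst => ?_⟩
  obtain ⟨n, hn, hns, hnk⟩ := exists_nielsen s t hst
  have h1 := hmin (h * n) (by
    change f⁻¹ * (h * n) ∈ E α
    rw [← mul_assoc]; exact mul_mem hh hn)
  have h2 : ¬ Φ (h * n) < Φ h := h1
  have hsn : ∀ F : FreeGroup α → ℕ, (∀ x, F x⁻¹ = F x) →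
      F (h (of s.1)) = F (h (mk [s])) ∧
      F ((h * n) (of s.1)) = F (h (mk [s]) * h (mk [t])) := by
    intro F hF
    rw [← map_mul, ← hns, MulAut.mul_apply]
    obtain ⟨i, b⟩ := s
    cases b
    · rw [mk_false, map_inv, map_inv, map_inv, hF, hF]; exact ⟨rfl, rfl⟩
    · exact ⟨rfl, rfl⟩
  have hsum : ∀ F : FreeGroup α → ℕ, (∀ x, F x⁻¹ = F x) →
      ∑ i, F ((h * n) (of i)) + F (h (mk [s])) =
        ∑ i, F (h (of i)) + F (h (mk [s]) * h (mk [t])) := by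
    intro F hF
    rw [← Finset.sum_erase_add _ _ (Finset.mem_univ s.1),
      ← Finset.sum_erase_add Finset.univ (fun i => F (h (of i))) (Finset.mem_univ s.1),
      (hsn F hF).1, (hsn F hF).2]
    have : ∑ i ∈ Finset.univ.erase s.1, F ((h * n) (of i)) =
        ∑ i ∈ Finset.univ.erase s.1, F (h (of i)) := by
      refine Finset.sum_congr rfl fun k hk => ?_
      rw [MulAut.mul_apply, hnk k (Finset.ne_of_mem_erase hk)]
    omega
  have e1 := hsum norm fun x => norm_inv_eq
  have e2 := hsum mu mu_inv
  rw [Prod.Lex.toLex_lt_toLex] at h2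
  simp only [not_or, not_and] at h2
  obtain ⟨h3, h4⟩ := h2
  rcases lt_trichotomy (norm (h (mk [s]))) (norm (h (mk [s]) * h (mk [t]))) with h5 | h5 | h5
  · exact Or.inl h5
  · refine Or.inr ⟨h5, ?_⟩
    have := h4 (by omega)
    omega
  · omega

section Growth
variable [Fintype α] {h : MulAut (FreeGroup α)}

theorem mk_ne_one (s : α × Bool) : mk [s] ≠ 1 := by
  intro H
  have := congrArg FreeGroup.norm H
  simp [FreeGroup.norm] at this

theorem val_ne_one (h : MulAut (FreeGroup α)) (s : α × Bool) : h (mk [s]) ≠ 1 := by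
  rw [Ne, EmbeddingLike.map_eq_one_iff]
  exact mk_ne_one s

theorem norm_val_pos (h : MulAut (FreeGroup α)) (s : α × Bool) : 0 < norm (h (mk [s])) :=
  Nat.pos_of_ne_zero fun H => val_ne_one h s (FreeGroup.norm_eq_zero.1 H)

/-- The formal inverse of a letter. -/
def bar (s : α × Bool) : α × Bool := (s.1, !s.2)

theorem mk_bar (s : α × Bool) : mk [bar s] = (mk [s])⁻¹ := by
  rw [inv_mk]; rfl

theorem val_bar (s : α × Bool) : h (mk [bar s]) = (h (mk [s]))⁻¹ := by
  rw [mk_bar, map_inv]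

/-- `s` and `t` may be adjacent letters of a reduced word. -/
def Adj (s t : α × Bool) : Prop := s.1 = t.1 → s.2 = t.2

theorem Adj.symm_bar {s t : α × Bool} (H : Adj s t) : Adj (bar t) (bar s) := by
  intro h1
  have := H h1.symm
  simp [bar, this]

/-- At most half of the right factor cancels in a product of two adjacent images. -/
theorem two_canc_le_right (hr : Reduced h) {s t : α × Bool} (H : Adj s t) :
    2 * canc (h (mk [s])) (h (mk [t])) ≤ norm (h (mk [t])) := by
  have h1 := norm_mul_add (h (mk [s])) (h (mk [t]))
  by_cases hst : s.1 = t.1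
  · have : s = t := Prod.ext hst (H hst)
    subst this
    have := norm_lt_norm_sq _ (val_ne_one h s)
    omega
  · rcases hr s t hst with h2 | h2 <;> omega

theorem two_canc_le_left (hr : Reduced h) {s t : α × Bool} (H : Adj s t) :
    2 * canc (h (mk [s])) (h (mk [t])) ≤ norm (h (mk [s])) := by
  have := two_canc_le_right hr H.symm_bar
  rwa [val_bar, val_bar, canc_inv, norm_inv_eq] at this

/-- The middle one of three consecutive images never cancels completely. When exactly its two
halves would cancel against its neighbours, minimality of the tie-break is violated. -/
theorem canc_add_lt (hr : Reduced h) {s t r : α × Bool} (H1 : Adj s t) (H2 : Adj t r) :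
    canc (h (mk [s])) (h (mk [t])) + canc (h (mk [t])) (h (mk [r])) < norm (h (mk [t])) := by
  have a1 := two_canc_le_right hr H1
  have a2 := two_canc_le_left hr H2
  by_contra hcon
  obtain ⟨k, hk⟩ : ∃ k, canc (h (mk [s])) (h (mk [t])) = k := ⟨_, rfl⟩
  have hk2 : canc (h (mk [t])) (h (mk [r])) = k := by omega
  have ht : norm (h (mk [t])) = 2 * k := by omega
  have hs := two_canc_le_left hr H1
  have hr' := two_canc_le_right hr H2
  have key : ∀ u v : α × Bool, Adj u v → 2 * k ≤ norm (h (mk [u])) →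
      norm (h (mk [v])) = 2 * k → canc (h (mk [u])) (h (mk [v])) = k →
      ¬ code ((h (mk [v]))⁻¹.toWord.take k) < code ((h (mk [v])).toWord.take k) := by
    intro u v huv hu hv hc hcode
    by_cases hne : u.1 = v.1
    · have : u = v := Prod.ext hne (huv hne)
      subst this
      have b1 := norm_lt_norm_sq _ (val_ne_one h u)
      have b2 := norm_mul_add (h (mk [u])) (h (mk [u]))
      omega
    · obtain ⟨c1, c2⟩ := mu_mul_lt hv hu hc hcode
      rcases hr u v hne with h2 | h2 <;> omega
  have k1 := key s t H1 (by omega) ht hk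
  have k2 := key (bar r) (bar t) H2.symm_bar (by rw [val_bar, norm_inv_eq]; omega)
    (by rw [val_bar, norm_inv_eq]; omega) (by rw [val_bar, val_bar, canc_inv]; omega)
  rw [val_bar, inv_inv] at k2
  have hl1 : (h (mk [t])).toWord.length = 2 * k := ht
  have hl2 : (h (mk [t]))⁻¹.toWord.length = 2 * k := by
    have := norm_inv_eq (x := h (mk [t]))
    rw [ht] at this; exact this
  -- Equal halves force `h t` to be of the form `p * p⁻¹`.
  have heq := code_inj (by simp [hl1]) (le_antisymm (not_lt.1 k2) (not_lt.1 k1))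
  apply val_ne_one h t
  have e1 : (h (mk [t])).toWord = (h (mk [t])).toWord.take k ++ (h (mk [t])).toWord.drop k :=
    (List.take_append_drop _ _).symm
  have e2 : (h (mk [t]))⁻¹.toWord = invRev ((h (mk [t])).toWord.drop k) ++
      invRev ((h (mk [t])).toWord.take k) := by
    conv_lhs => rw [toWord_inv, e1, invRev_append]
  rw [e2, List.take_left' (by rw [invRev_length, List.length_drop]; omega)] at heq
  rw [← mk_toWord (x := h (mk [t])), e1, ← heq, ← mul_mk, ← inv_mk, inv_mul_cancel]

theorem mk_cons (t : α × Bool) (M : List (α × Bool)) : mk (t :: M) = mk [t] * mk M := by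
  rw [mul_mk]; rfl

/-- Images of reduced words under a reduced tuple are at least as long as the words: every
letter contributes at least one uncancelled letter. For the induction, the cancellation against a
possible preceding letter `s` is recorded too: it is caused by the first letter alone. -/
theorem growth (hr : Reduced h) (M : List (α × Bool)) :
    ∀ t, IsReduced (t :: M) → ∀ s, Adj s t →
      canc (h (mk [s])) (h (mk (t :: M))) = canc (h (mk [s])) (h (mk [t])) ∧
      canc (h (mk [s])) (h (mk [t])) + (M.length + 1) ≤ norm (h (mk (t :: M))) := by
  induction M with
  | nil =>
    intro t _ s H
    have h1 := two_canc_le_right hr H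
    have h2 := norm_val_pos h t
    refine ⟨rfl, ?_⟩
    simp only [List.length_nil]
    omega
  | cons r M ih =>
    intro t ht s H
    have htr : Adj t r := (List.isChain_cons_cons.1 ht).1
    obtain ⟨i1, i2⟩ := ih r ht.tail t htr
    have h1 := canc_add_lt hr H htr
    have h2 := norm_mul_add (h (mk [t])) (h (mk (r :: M)))
    have h3 := norm_mul_add (h (mk [t]))⁻¹ (h (mk (t :: r :: M)))
    rw [mk_cons t (r :: M), map_mul, inv_mul_cancel_left, norm_inv_eq] at h3
    rw [i1] at h2
    rw [mk_cons t (r :: M), map_mul]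
    refine ⟨?_, ?_⟩
    · refine lcp_ultra _ _ _ ?_
      have h4 : canc (h (mk [t]))⁻¹ (h (mk [t]) * h (mk (r :: M))) =
        lcp (h (mk [t])).toWord (h (mk [t]) * h (mk (r :: M))).toWord := by
        rw [canc, inv_inv]
      rw [← h4]
      change canc (h (mk [s])) (h (mk [t])) < _
      omega
    · simp only [List.length_cons]
      omega

end Growth

/-- Nielsen's theorem: signed permutations and right transvections generate `Aut(F)`. -/
theorem mem_E [Fintype α] (f : MulAut (FreeGroup α)) : f ∈ E α := by
  obtain ⟨h, hfh, hr⟩ := exists_reduced f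
  have hlen : ∀ x : FreeGroup α, norm x ≤ norm (h x) := by
    intro x
    cases hx : x.toWord with
    | nil => simp [FreeGroup.norm, hx]
    | cons t M =>
      have h1 : IsReduced (t :: M) := hx ▸ isReduced_toWord
      have h2 := (growth hr M t h1 t (fun _ => rfl)).2
      rw [← hx, mk_toWord] at h2
      rw [FreeGroup.norm, hx, List.length_cons]
      omega
  -- since `h` does not shorten words, `h⁻¹` maps generators to words of length one
  have hinv : h⁻¹ ∈ SP α := by
    have h1 : ∀ i, ∃ s : α × Bool, h⁻¹ (of i) = mk [s] := by
      intro i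
      have h2 := hlen (h⁻¹ (of i))
      rw [MulAut.apply_inv_self, norm_of] at h2
      have h3 : norm (h⁻¹ (of i)) ≠ 0 := by
        rw [Ne, FreeGroup.norm_eq_zero, EmbeddingLike.map_eq_one_iff]
        exact of_ne_one i
      have h4 : (h⁻¹ (of i)).toWord.length = 1 := by
        rw [FreeGroup.norm] at h2 h3; omega
      obtain ⟨s, hs⟩ := List.length_eq_one_iff.1 h4
      exact ⟨s, by rw [← hs, mk_toWord]⟩
    choose τ hτ using h1
    have hz : ∀ i, h⁻¹ (of i) = of (τ i).1 ^ ((if (τ i).2 then 1 else -1 : ℤˣ) : ℤ) := by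
      intro i
      rw [hτ]
      obtain ⟨j, b⟩ := τ i
      cases b
      · simp [mk_false]
      · simp [mk_true]
    have hinj : Function.Injective fun i => (τ i).1 := by
      intro i j hij
      simp only at hij
      have h1 := congrArg h (hz i)
      have h2 := congrArg h (hz j)
      rw [MulAut.apply_inv_self, map_zpow] at h1 h2
      rw [← hij] at h2
      have h3 : of i = of j ∨ of i = (of j)⁻¹ := by
        rw [h1, h2]
        split_ifs <;> simp
      rcases h3 with h3 | h3
      · exact of_injective h3
      · have h4 := congrArg toWord h3
        rw [toWord_inv, toWord_of, toWord_of] at h4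
        simp [invRev] at h4
    exact ⟨Equiv.ofBijective _ (Finite.injective_iff_bijective.1 hinj), _, hz⟩
  have : f = h * (f⁻¹ * h)⁻¹ := by group
  rw [this]
  exact mul_mem (SP_le_E (by simpa using inv_mem hinv)) (inv_mem hfh)

end Nielsen

/-! ### The quotient of `Aut(F_g)` by the commutators with `IA` -/

namespace Coinv

open Nielsen
open FreeGroup hiding map_mul map_inv map_one
open scoped commutatorElement

variable {g : ℕ}

theorem mem_IA {f : MulAut (FreeGroup (Fin g))} :
    f ∈ IAgrp g ↔ ∀ x, Abelianization.of (f x) = Abelianization.of x := Iff.rfl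

instance IA_normal (g : ℕ) : (IAgrp g).Normal where
  conj_mem k hk h := by
    rw [mem_IA] at hk ⊢
    intro x
    have h1 := congrArg (Abelianization.map h.toMonoidHom) (hk (h⁻¹ x))
    rw [Abelianization.map_of, Abelianization.map_of] at h1
    have h2 : h (h⁻¹ x) = x := MulAut.apply_inv_self _ h x
    change Abelianization.of (h (k (h⁻¹ x))) = Abelianization.of (h (h⁻¹ x)) at h1
    rw [h2] at h1
    exact h1

theorem mem_IA_of_gen {f : MulAut (FreeGroup (Fin g))}
    (h : ∀ k, Abelianization.of (f (of k)) = Abelianization.of (of k)) : f ∈ IAgrp g := by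
  have : (Abelianization.of.comp f.toMonoidHom : FreeGroup (Fin g) →* _) = Abelianization.of :=
    FreeGroup.ext_hom _ _ h
  exact fun x => DFunLike.congr_fun this x

/-- The group `[Aut(F_g), IA]`. -/
abbrev N (g : ℕ) : Subgroup (MulAut (FreeGroup (Fin g))) :=
  ⁅(⊤ : Subgroup (MulAut (FreeGroup (Fin g)))), IAgrp g⁆

theorem N_eq (g : ℕ) : N g = Subgroup.closure
      {c : MulAut (FreeGroup (Fin g)) |
        ∃ f k : MulAut (FreeGroup (Fin g)), k ∈ IAgrp g ∧ c = f * k * f⁻¹ * k⁻¹} := by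
  rw [N, Subgroup.commutator_def]
  congr 1
  ext c
  constructor
  · rintro ⟨f, -, k, hk, rfl⟩
    exact ⟨f, k, hk, rfl⟩
  · rintro ⟨f, k, hk, rfl⟩
    exact ⟨f, trivial, k, hk, rfl⟩

theorem N_le : N g ≤ IAgrp g := Subgroup.commutator_le_right _ _

theorem conj_gen_of {i j : Fin g} (h : i ≠ j) (k : Fin g) :
    ((L i j)⁻¹ * R i j) (of k) = if k = j then (of i)⁻¹ * of j * of i else of k := by
  rw [MulAut.mul_apply, R_of h]
  split_ifs with hk
  · rw [map_mul, L_inv_of h, L_inv_of h, if_pos rfl, if_neg h]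
  · rw [L_inv_of h, if_neg hk]

/-- The conjugation `x_j ↦ x_i⁻¹ x_j x_i` of one generator by another lies in `IA`. -/
theorem conj_gen_mem_IA {i j : Fin g} (h : i ≠ j) : (L i j)⁻¹ * R i j ∈ IAgrp g := by
  refine mem_IA_of_gen fun k => ?_
  rw [conj_gen_of h]
  split_ifs with hk
  · subst hk
    rw [map_mul, map_mul, map_inv, mul_comm _ (Abelianization.of (of k)), inv_mul_cancel_right]
  · rfl

theorem exists_third (hg : 3 ≤ g) (l j : Fin g) : ∃ i, i ≠ l ∧ i ≠ j := by
  have : ({l, j} : Finset (Fin g)).card < (Finset.univ : Finset (Fin g)).card := by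
    rw [Finset.card_univ, Fintype.card_fin]
    exact lt_of_le_of_lt Finset.card_le_two hg
  obtain ⟨i, -, hi⟩ := Finset.exists_mem_notMem_of_card_lt_card this
  exact ⟨i, by simpa using hi⟩

/-- This is where a third index is needed: conjugating `x_j ↦ x_i⁻¹ x_j x_i` by the transvection
`x_i ↦ x_i x_l` multiplies it by `x_j ↦ x_l⁻¹ x_j x_l`. -/
theorem conj_gen_mem_N (hg : 3 ≤ g) {l j : Fin g} (h : l ≠ j) : (L l j)⁻¹ * R l j ∈ N g := by
  obtain ⟨i, hil, hij⟩ := exists_third hg l j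
  have key : R l i * ((L i j)⁻¹ * R i j) = ((L i j)⁻¹ * R i j) * ((L l j)⁻¹ * R l j) * R l i := by
    apply aut_ext
    intro k
    have e1 := conj_gen_of hij
    have e2 := conj_gen_of h
    generalize (L i j)⁻¹ * R i j = c at *
    generalize (L l j)⁻¹ * R l j = d at *
    by_cases hkj : k = j
    · subst hkj
      simp [MulAut.mul_apply, e1, e2, R_of hil.symm, hij.symm, h, mul_assoc]
    · by_cases hki : k = i
      · subst hki
        simp [MulAut.mul_apply, e1, e2, R_of hil.symm, hij, h]
      · simp [MulAut.mul_apply, e1, e2, R_of hil.symm, hkj, hki]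
  set c := (L i j)⁻¹ * R i j with hc
  set d := (L l j)⁻¹ * R l j with hd
  have h1 : ⁅R l i, c⁆ ∈ N g :=
    Subgroup.commutator_mem_commutator trivial (conj_gen_mem_IA hij)
  have h2 : d = c⁻¹ * ⁅R l i, c⁆ * c⁻¹⁻¹ := by
    rw [commutatorElement_def, key]; group
  rw [h2]
  exact (inferInstance : (N g).Normal).conj_mem _ h1 _

/-! ### The action on the abelianization -/

/-- The exponent-sum homomorphism `F_g → ℤ^g`. -/
noncomputable def abv : FreeGroup (Fin g) →* Multiplicative (Fin g → ℤ) :=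
  lift fun i => Multiplicative.ofAdd (Pi.single i 1)

/-- The endomorphism of `ℤ^g` induced by an automorphism of `F_g`. -/
noncomputable def lin (f : MulAut (FreeGroup (Fin g))) : Module.End ℤ (Fin g → ℤ) :=
  Fintype.linearCombination ℤ fun i => (abv (f (of i))).toAdd

theorem lin_apply (f : MulAut (FreeGroup (Fin g))) (v : Fin g → ℤ) :
    lin f v = ∑ i, v i • (abv (f (of i))).toAdd := rfl

theorem lin_single (f : MulAut (FreeGroup (Fin g))) (i : Fin g) :
    lin f (Pi.single i 1) = (abv (f (of i))).toAdd := by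
  simp [lin]

theorem lin_abv (f : MulAut (FreeGroup (Fin g))) (x : FreeGroup (Fin g)) :
    lin f (abv x).toAdd = (abv (f x)).toAdd := by
  have : (AddMonoidHom.toMultiplicative (lin f).toAddMonoidHom).comp abv =
      abv.comp f.toMonoidHom := by
    refine FreeGroup.ext_hom _ _ fun i => ?_
    change Multiplicative.ofAdd (lin f (abv (of i)).toAdd) = abv (f (of i))
    have : (abv (of i)).toAdd = Pi.single i 1 := by simp [abv]
    rw [this, lin_single]; rfl
  exact congrArg Multiplicative.toAdd (DFunLike.congr_fun this x)

theorem abv_eq {x y : FreeGroup (Fin g)} (h : Abelianization.of x = Abelianization.of y) :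
    abv x = abv y := by
  rw [← Abelianization.lift_apply_of abv x, h, Abelianization.lift_apply_of]

/-- The action of `Aut(F_g)` on `ℤ^g`. -/
noncomputable def linHom : MulAut (FreeGroup (Fin g)) →* Module.End ℤ (Fin g → ℤ) where
  toFun := lin
  map_one' := by
    refine LinearMap.pi_ext' fun i => LinearMap.ext_ring ?_
    simp [lin_single, abv]
  map_mul' f h := by
    refine LinearMap.pi_ext' fun i => LinearMap.ext_ring ?_
    simp only [LinearMap.comp_apply, LinearMap.single_apply, Module.End.mul_apply]
    rw [lin_single, lin_single, lin_abv]; rfl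

theorem linHom_of_IA {f : MulAut (FreeGroup (Fin g))} (hf : f ∈ IAgrp g) : linHom f = 1 := by
  refine LinearMap.pi_ext' fun i => LinearMap.ext_ring ?_
  change lin f (Pi.single i 1) = Pi.single i 1
  rw [lin_single, abv_eq (hf (of i))]
  simp [abv]

/-- The quotient of `Aut(F_g)` by `[Aut(F_g), IA]`. -/
abbrev Q (g : ℕ) := MulAut (FreeGroup (Fin g)) ⧸ N g

/-- The projection to the quotient. -/
abbrev π (g : ℕ) : MulAut (FreeGroup (Fin g)) →* Q g := QuotientGroup.mk' (N g)

/-- The action of the quotient on `ℤ^g`. -/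
noncomputable def linQ (g : ℕ) : Q g →* Module.End ℤ (Fin g → ℤ) :=
  QuotientGroup.lift (N g) linHom fun _ hf => linHom_of_IA (N_le hf)

theorem linQ_π (f : MulAut (FreeGroup (Fin g))) : linQ g (π g f) = lin f := rfl

theorem π_L (hg : 3 ≤ g) {i j : Fin g} (h : i ≠ j) : π g (L i j) = π g (R i j) :=
  QuotientGroup.eq.2 (conj_gen_mem_N hg h)

theorem lin_SP {f : MulAut (FreeGroup (Fin g))} {σ : Equiv.Perm (Fin g)} {ε : Fin g → ℤˣ}
    (h : ∀ i, f (of i) = of (σ i) ^ (ε i : ℤ)) (v : Fin g → ℤ) (k : Fin g) :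
    lin f v (σ k) = ε k * v k := by
  rw [lin_apply, Finset.sum_apply, Finset.sum_eq_single k]
  · simp [h, abv, mul_comm]
  · intro b _ hb
    have : σ k ≠ σ b := fun H => hb (σ.injective H).symm
    simp [h, abv, this]
  · simp

/-- Conjugation by a signed permutation takes right transvections to right or left ones, up to
inversion: inverting `x_j` exchanges the two sides. -/
theorem conj_R {f : MulAut (FreeGroup (Fin g))} {σ : Equiv.Perm (Fin g)} {ε : Fin g → ℤˣ}
    (h : ∀ i, f (of i) = of (σ i) ^ (ε i : ℤ)) {i j : Fin g} (hij : i ≠ j) :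
    f * R i j = (if ε j = 1 then R (σ i) (σ j) else L (σ i) (σ j)) ^ ((ε i * ε j : ℤˣ) : ℤ) * f := by
  have hs : σ i ≠ σ j := fun H => hij (σ.injective H)
  apply aut_ext
  intro k
  rw [MulAut.mul_apply, MulAut.mul_apply, R_of hij, h]
  have hk : k ≠ j → σ k ≠ σ j := fun H H' => H (σ.injective H')
  rcases Int.units_eq_one_or (ε i) with hi | hi <;> rcases Int.units_eq_one_or (ε j) with hj | hj
  all_goals
    by_cases hkj : k = j
    · subst hkj
      simp [h, hi, hj, R_of hs, L_of hs, R_symm_of hs, L_symm_of hs]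
    · simp [h, hi, hj, R_of hs, L_of hs, R_symm_of hs, L_symm_of hs, hkj]

/-- The quotient satisfies the relations of the presentation of `GL_g(ℤ)`. Left and right
transvections agree in it, and either may be used to make a relation hold in `Aut(F_g)`. -/
noncomputable def datum (hg : 3 ≤ g) : SteinbergDatum (Fin g) (Q g) where
  ρ := linQ g
  e i j := π g (R i j)
  W := (SP (Fin g)).map (π g)
  ρ_e i j hij v := by
    rw [linQ_π, lin_apply]
    have h1 : ∀ k, (abv (R i j (of k))).toAdd =
        Pi.single k 1 + if k = j then Pi.single i 1 else (0 : Fin g → ℤ) := by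
      intro k
      rw [R_of hij]
      split_ifs with hk
      · subst hk; simp [abv]
      · simp [abv]
    simp only [h1, smul_add, Finset.sum_add_distrib, smul_ite, smul_zero, Finset.sum_ite_eq',
      Finset.mem_univ, if_true]
    congr 1
    · ext l
      simp [Pi.single_apply]
    · ext l
      simp [Pi.single_apply]
  W_spec := by
    rintro _ ⟨f, ⟨σ, ε, h⟩, rfl⟩
    refine ⟨σ, ε, fun v k => by rw [linQ_π]; exact lin_SP h v k, fun i j hij => ?_⟩
    have hs : σ i ≠ σ j := fun H => hij (σ.injective H)
    rw [mul_inv_eq_iff_eq_mul, ← map_mul, conj_R h hij, map_mul, map_zpow]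
    split_ifs
    · rfl
    · rw [π_L hg hs]
  W_inj := by
    rintro _ ⟨f, ⟨σ, ε, h⟩, rfl⟩ h1
    rw [linQ_π] at h1
    have h2 : ∀ i, σ i = i ∧ ε i = 1 := by
      intro i
      have h3 := lin_SP h (Pi.single i 1) i
      rw [h1] at h3
      by_cases hi : σ i = i
      · refine ⟨hi, ?_⟩
        rw [hi] at h3
        simp only [Module.End.one_apply, Pi.single_eq_same, mul_one] at h3
        exact Units.ext h3.symm
      · have h4 : (0 : ℤ) = ε i := by simpa [hi] using h3
        exact absurd h4.symm (ε i).ne_zero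
    have : f = 1 := aut_ext fun k => by rw [h, (h2 k).1, (h2 k).2]; simp
    rw [this, map_one]
  exists_flip ε := by
    refine ⟨π g (flip ε), ⟨_, flip_mem ε, rfl⟩, fun v k => ?_⟩
    rw [linQ_π]
    exact lin_SP (σ := 1) (fun i => by simp) v k
  comm i j k l hij hkl hjk hil := by
    by_cases hjl : j = l
    · subst hjl
      rw [← π_L hg hkl]
      refine Commute.map (f := π g) (?_ : Commute (R i j) (L k j))
      apply aut_ext
      intro m
      by_cases hm : m = j <;>
        simp [MulAut.mul_apply, R_of hij, L_of hkl, hm, hij, hkl, mul_assoc]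
    · refine Commute.map (f := π g) (?_ : Commute (R i j) (R k l))
      apply aut_ext
      intro m
      by_cases hm : m = j
      · subst hm
        simp [MulAut.mul_apply, R_of hij, R_of hkl, hjl, hil]
      · by_cases hm' : m = l
        · subst hm'
          simp [MulAut.mul_apply, R_of hij, R_of hkl, hm, hjk.symm]
        · simp [MulAut.mul_apply, R_of hij, R_of hkl, hm, hm']
  chain i j l hij hjl hil := by
    rw [← map_mul, ← map_mul, ← map_mul]
    congr 1
    apply aut_ext
    intro m
    by_cases hm : m = j
    · subst hm
      simp [MulAut.mul_apply, R_of hij, R_of hjl, R_of hil, hjl, hil]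
    · by_cases hm' : m = l
      · subst hm'
        simp [MulAut.mul_apply, R_of hij, R_of hjl, R_of hil, hjl.symm, hil, mul_assoc]
      · simp [MulAut.mul_apply, R_of hij, R_of hjl, R_of hil, hm, hm']
  rot i j hij := by
    have h1 : π g (R i j) * (π g (R j i))⁻¹ * π g (R i j) =
        π g (R i j * (R j i)⁻¹ * L i j) := by
      rw [map_mul, map_mul, map_inv, π_L hg hij]
    rw [h1]
    refine ⟨_, ⟨Equiv.swap i j, fun k => if k = i then -1 else 1, fun k => ?_⟩, rfl⟩
    by_cases hkj : k = j
    · subst hkj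
      simp [MulAut.mul_apply, L_of hij, R_of hij, R_symm_of hij.symm, hij, hij.symm]
    · by_cases hki : k = i
      · subst hki
        simp [MulAut.mul_apply, L_of hij, R_of hij, R_symm_of hij.symm, hij]
      · simp [MulAut.mul_apply, L_of hij, R_of hij, R_symm_of hij.symm, hkj, hki,
          Equiv.swap_apply_of_ne_of_ne]

theorem π_mem (hg : 3 ≤ g) (f : MulAut (FreeGroup (Fin g))) :
    π g f ∈ (datum hg).QA Finset.univ := by
  have h := mem_E f
  have h2 : E (Fin g) ≤ ((datum hg).QA Finset.univ).comap (π g) := by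
    refine (Subgroup.closure_le _).2 ?_
    rintro x (⟨i, j, hij, rfl⟩ | hx)
    · exact Subgroup.subset_closure
        (Or.inl ⟨i, Finset.mem_univ _, j, Finset.mem_univ _, hij, rfl⟩)
    · refine Subgroup.subset_closure (Or.inr ⟨⟨x, hx, rfl⟩, fun k hk => ?_⟩)
      exact absurd (Finset.mem_univ k) hk
  exact h2 h

end Coinv

/-- For `g ≥ 3`, the group `IA` equals the subgroup of `Aut(F_g)` generated
by all commutators `f ∘ k ∘ f⁻¹ ∘ k⁻¹` with `f ∈ Aut(F_g)` and `k ∈ IA`; equivalently, the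
coinvariants of the abelianization of `IA` under the conjugation action of `Aut(F_g)` are
trivial. -/
theorem stmt11 (g : ℕ) (hg : 3 ≤ g) :
    IAgrp g = Subgroup.closure
      {c : MulAut (FreeGroup (Fin g)) |
        ∃ f k : MulAut (FreeGroup (Fin g)), k ∈ IAgrp g ∧ c = f * k * f⁻¹ * k⁻¹} := by
  rw [← Coinv.N_eq]
  refine le_antisymm (fun f hf => ?_) Coinv.N_le
  have h1 := (Coinv.datum hg).ρ_injOn Finset.univ _ (Coinv.π_mem hg f) (Coinv.linHom_of_IA hf)
  exact (QuotientGroup.eq_one_iff f).1 h1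
end
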